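/- (Policy gradient approximation by the finite system.) Let 𝒳, 𝒰, 𝒳⁰, 𝒰⁰ be compact metric spaces, with p, p⁰, r Lipschitz; let the parameter map Γ, the joint policy π̃^θ and its log-gradient ∇_θ log π̃^θ (or gradient ∇_θ π̃^θ) be Lipschitz and uniformly bounded. Let ∇_θ J(π̃^θ) = Σ_{t≥0} γ^t E[ Q^θ(x⁰_t, μ_t, u⁰_t, ξ_t) ∇_θ log π̃^θ(u⁰_t, ξ_t | x⁰_t, μ_t) ] be the exact policy gradient of the limiting M3FC MDP, and let the approximate policy gradient computed on the N-agent M3FC system be ∇̂_θ J(π̃^θ) = Σ_{t≥0} γ^t E[ Q̂^θ(x_t^{0,N}, μ_t^N, u_t^{0,N}, ξ_t^N) ∇_θ log π̃^θ(u_t^{0,N}, ξ_t^N | x_t^{0,N}, μ_t^N) ]. Then ‖ ∇̂_θ J(π̃^θ) − ∇_θ J(π̃^θ) ‖ → 0 as N → ∞, uniformly over policy parameters θ. -/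

import Mathlib

open MeasureTheory

noncomputable instance {X : Type*} [MeasurableSpace X] : MeasurableSpace (ProbabilityMeasure X) :=
  inferInstanceAs (MeasurableSpace {μ : Measure X // IsProbabilityMeasure μ})

/-- `W₁` distance on probability measures, via Kantorovich duality. -/
noncomputable def W1 {X : Type*} [MeasurableSpace X] [PseudoMetricSpace X]
    (μ ν : ProbabilityMeasure X) : ℝ :=
  ⨆ f : {f : X → ℝ // LipschitzWith 1 f},
    |∫ x, (f : X → ℝ) x ∂(μ : Measure X) - ∫ x, (f : X → ℝ) x ∂(ν : Measure X)|

/-- Empirical measure of `N` points (an arbitrary probability measure if `N = 0`). -/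
noncomputable def emp {X : Type*} [MeasurableSpace X] [Nonempty X] (N : ℕ) (x : Fin N → X) :
    ProbabilityMeasure X := by
  classical
  exact if hN : N = 0 then ⟨Measure.dirac (Classical.arbitrary X), inferInstance⟩
  else ⟨(N : ENNReal)⁻¹ • ∑ i : Fin N, Measure.dirac (x i), by
    constructor
    simp only [Measure.smul_apply, Measure.coe_finset_sum, Finset.sum_apply,
      Measure.dirac_apply' _ MeasurableSet.univ, smul_eq_mul]
    simp only [Set.indicator_univ, Pi.one_apply, Finset.sum_const, Finset.card_univ,
      Fintype.card_fin, nsmul_eq_mul, mul_one]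
    exact ENNReal.inv_mul_cancel (by exact_mod_cast hN) (by simp)⟩

/-- Law of `(x⁰_t, (u⁰_t, ξ_t), (x^{i,N}_t)_i)` in the `N`-agent M3FC system under the
parametrized joint policy `π̃^θ` and decision-rule map `Γ`, started from the initial law `ι`:
at each step the joint action `(u⁰,ξ)` is sampled from `π̃^θ(·|x⁰,μ^N)`, each minor agent
samples its action from `Γ(ξ)(·|xⁱ)`, and states transition through `p`, `p⁰`. -/
noncomputable def pLawNFrom {X U X0 U0 Xi Θ : Type*} [MeasurableSpace X] [Nonempty X]
    [MeasurableSpace U] [MeasurableSpace X0] [MeasurableSpace U0] [MeasurableSpace Xi]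
    (p : X → U → X0 → U0 → ProbabilityMeasure X → ProbabilityMeasure X)
    (p0 : X0 → U0 → ProbabilityMeasure X → ProbabilityMeasure X0)
    (Γ : Xi → X → ProbabilityMeasure U)
    (pit : Θ → X0 → ProbabilityMeasure X → ProbabilityMeasure (U0 × Xi))
    (θ : Θ) (N : ℕ) (ι : Measure (X0 × (U0 × Xi) × (Fin N → X))) :
    ℕ → Measure (X0 × (U0 × Xi) × (Fin N → X))
  | 0 => ι
  | t + 1 => (pLawNFrom p p0 Γ pit θ N ι t).bind fun s =>
      (((p0 s.1 s.2.1.1 (emp N s.2.2) : Measure X0)).prod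
        (Measure.pi fun i => ((Γ s.2.1.2 (s.2.2 i) : Measure U)).bind
          fun u => (p (s.2.2 i) u s.1 s.2.1.1 (emp N s.2.2) : Measure X))).bind
        fun y => ((pit θ y.1 (emp N y.2) : Measure (U0 × Xi))).map fun a => (y.1, a, y.2)

/-- Law of `(x⁰_t, (u⁰_t, ξ_t), μ_t)` in the limiting M3FC process under the parametrized
joint policy `π̃^θ`, where `TG x⁰ u⁰ ξ μ` is the deterministic mean field transition
`T(x⁰,u⁰,μ, μ ⊗ Γ(ξ))`, started from the initial law `ι`. -/
noncomputable def pLimLawFrom {X U0 X0 Xi Θ : Type*} [MeasurableSpace X]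
    [MeasurableSpace X0] [MeasurableSpace U0] [MeasurableSpace Xi]
    (p0 : X0 → U0 → ProbabilityMeasure X → ProbabilityMeasure X0)
    (pit : Θ → X0 → ProbabilityMeasure X → ProbabilityMeasure (U0 × Xi))
    (TG : X0 → U0 → Xi → ProbabilityMeasure X → ProbabilityMeasure X)
    (θ : Θ) (ι : Measure (X0 × (U0 × Xi) × ProbabilityMeasure X)) :
    ℕ → Measure (X0 × (U0 × Xi) × ProbabilityMeasure X)
  | 0 => ι
  | t + 1 => (pLimLawFrom p0 pit TG θ ι t).bind fun s =>
      ((p0 s.1 s.2.1.1 s.2.2 : Measure X0)).bind fun y0 =>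
        ((pit θ y0 (TG s.1 s.2.1.1 s.2.1.2 s.2.2) : Measure (U0 × Xi))).map
          fun a => (y0, a, TG s.1 s.2.1.1 s.2.1.2 s.2.2)

section Helpers
open Filter Topology
set_option linter.all false

lemma abs_integral_sub_le_const {Y : Type*} [MeasurableSpace Y] {f g : Y → ℝ} {c : ℝ} (μ : Measure Y) [IsProbabilityMeasure μ]
    (hf : Integrable f μ) (hg : Integrable g μ) (h : ∀ x, |f x - g x| ≤ c) :
    |∫ x, f x ∂μ - ∫ x, g x ∂μ| ≤ c := by
  rw [← integral_sub hf hg]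
  have := norm_integral_le_of_norm_le_const (μ := μ) (f := fun x => f x - g x) (C := c)
    (ae_of_all _ h)
  simpa using this

section W1basic
variable {X : Type*} [MetricSpace X] [CompactSpace X] [MeasurableSpace X] [BorelSpace X]

lemma lip_integrable {f : X → ℝ} {K : NNReal} (hf : LipschitzWith K f) (μ : Measure X)
    [IsFiniteMeasure μ] : Integrable f μ := by
  have hc := hf.continuous
  obtain ⟨C, hC⟩ := isCompact_univ.exists_bound_of_continuousOn hc.continuousOn
  exact Integrable.of_bound hc.aestronglyMeasurable C (ae_of_all _ fun x => hC x trivial)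

lemma W1_term_le (μ ν : ProbabilityMeasure X) {f : X → ℝ} (hf : LipschitzWith 1 f) :
    |∫ x, f x ∂(μ : Measure X) - ∫ x, f x ∂(ν : Measure X)| ≤ 2 * Metric.diam (Set.univ : Set X) := by
  haveI : Nonempty X := by
    by_contra h
    rw [not_nonempty_iff] at h
    exact (IsProbabilityMeasure.ne_zero (μ : Measure X)) (Measure.eq_zero_of_isEmpty _)
  obtain ⟨x0⟩ := ‹Nonempty X›
  have hb : ∀ x, |f x - f x0| ≤ Metric.diam (Set.univ : Set X) := fun x => by
    have := hf.dist_le_mul x x0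
    rw [Real.dist_eq] at this
    have h2 := Metric.dist_le_diam_of_mem isCompact_univ.isBounded (Set.mem_univ x) (Set.mem_univ x0)
    simp at this; linarith
  have h1 := abs_integral_sub_le_const (μ : Measure X) (lip_integrable hf _)
    (integrable_const (f x0)) hb
  have h2 := abs_integral_sub_le_const (ν : Measure X) (lip_integrable hf _)
    (integrable_const (f x0)) hb
  simp only [integral_const, probReal_univ, one_smul] at h1 h2
  rw [abs_le] at *
  constructor <;> linarith [h1.1, h1.2, h2.1, h2.2]

lemma W1_bdd (μ ν : ProbabilityMeasure X) : BddAbove (Set.range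
    fun f : {f : X → ℝ // LipschitzWith 1 f} =>
    |∫ x, (f : X → ℝ) x ∂(μ : Measure X) - ∫ x, (f : X → ℝ) x ∂(ν : Measure X)|) := by
  refine ⟨2 * Metric.diam (Set.univ : Set X), ?_⟩
  rintro _ ⟨f, rfl⟩
  exact W1_term_le μ ν f.2

lemma le_W1 (μ ν : ProbabilityMeasure X) {f : X → ℝ} (hf : LipschitzWith 1 f) :
    |∫ x, f x ∂(μ : Measure X) - ∫ x, f x ∂(ν : Measure X)| ≤ W1 μ ν :=
  le_ciSup (W1_bdd μ ν) ⟨f, hf⟩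

lemma W1_le {μ ν : ProbabilityMeasure X} {c : ℝ} (h : ∀ f : X → ℝ, LipschitzWith 1 f →
    |∫ x, f x ∂(μ : Measure X) - ∫ x, f x ∂(ν : Measure X)| ≤ c) : W1 μ ν ≤ c := by
  haveI : Nonempty {f : X → ℝ // LipschitzWith 1 f} := ⟨⟨fun _ => 0, LipschitzWith.const' 0⟩⟩
  exact ciSup_le fun f => h f f.2

lemma W1_nonneg (μ ν : ProbabilityMeasure X) : 0 ≤ W1 μ ν :=
  (abs_nonneg _).trans (le_W1 μ ν (LipschitzWith.const' (0:ℝ)))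

lemma W1_self (μ : ProbabilityMeasure X) : W1 μ μ = 0 :=
  le_antisymm (W1_le fun f _ => by simp) (W1_nonneg _ _)

lemma W1_comm (μ ν : ProbabilityMeasure X) : W1 μ ν = W1 ν μ :=
  le_antisymm (W1_le fun f hf => by rw [abs_sub_comm]; exact le_W1 _ _ hf)
    (W1_le fun f hf => by rw [abs_sub_comm]; exact le_W1 _ _ hf)

lemma W1_triangle (μ ν ρ : ProbabilityMeasure X) : W1 μ ρ ≤ W1 μ ν + W1 ν ρ :=
  W1_le fun _ hf => (abs_sub_le _ _ _).trans (add_le_add (le_W1 _ _ hf) (le_W1 _ _ hf))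

lemma W1_le_diam (μ ν : ProbabilityMeasure X) : W1 μ ν ≤ 2 * Metric.diam (Set.univ : Set X) :=
  W1_le fun _ hf => W1_term_le _ _ hf

lemma lipschitz_one_of_abs {Y : Type*} [PseudoMetricSpace Y] {f : Y → ℝ}
    (h : ∀ x y, |f x - f y| ≤ dist x y) : LipschitzWith 1 f :=
  LipschitzWith.of_dist_le_mul fun x y => by simpa [Real.dist_eq] using h x y

lemma lipschitz_of_abs {Y : Type*} [PseudoMetricSpace Y] {f : Y → ℝ} {K : ℝ} (hK : 0 ≤ K)
    (h : ∀ x y, |f x - f y| ≤ K * dist x y) : LipschitzWith ⟨K, hK⟩ f :=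
  LipschitzWith.of_dist_le_mul fun x y => by rw [Real.dist_eq]; exact h x y

/-- Scaling a bound for 1-Lipschitz test functions, with a general gauge `d`. -/
lemma scale_lip {Y : Type*} [MeasurableSpace Y] {d : Y → Y → ℝ} {μ ν : Measure Y}
    [IsProbabilityMeasure μ] [IsProbabilityMeasure ν] {c : ℝ}
    (h : ∀ f : Y → ℝ, (∀ x y, |f x - f y| ≤ d x y) → |∫ x, f x ∂μ - ∫ x, f x ∂ν| ≤ c)
    {f : Y → ℝ} {K : ℝ} (hK : 0 ≤ K) (hf : ∀ x y, |f x - f y| ≤ K * d x y) :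
    |∫ x, f x ∂μ - ∫ x, f x ∂ν| ≤ K * c := by
  rcases hK.eq_or_lt with rfl | hK
  · haveI : Nonempty Y := by
      by_contra h
      rw [not_nonempty_iff] at h
      exact (IsProbabilityMeasure.ne_zero μ) (Measure.eq_zero_of_isEmpty _)
    obtain ⟨y⟩ := ‹Nonempty Y›
    have : f = fun _ => f y := by
      ext x
      have := hf x y
      rw [zero_mul] at this
      have := abs_nonpos_iff.mp this
      linarith
    rw [this]; simp
  · have := h (fun x => K⁻¹ * f x) (fun x y => by
      rw [← mul_sub, abs_mul, abs_of_pos (inv_pos.mpr hK)]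
      rw [inv_mul_le_iff₀ hK]; exact hf x y)
    rw [integral_const_mul, integral_const_mul, ← mul_sub, abs_mul, abs_of_pos (inv_pos.mpr hK),
      inv_mul_le_iff₀ hK] at this
    exact this

lemma scale_lip' {Y : Type*} [MeasurableSpace Y] [PseudoMetricSpace Y] {μ ν : Measure Y}
    [IsProbabilityMeasure μ] [IsProbabilityMeasure ν] {c : ℝ}
    (h : ∀ f : Y → ℝ, LipschitzWith 1 f → |∫ x, f x ∂μ - ∫ x, f x ∂ν| ≤ c)
    {f : Y → ℝ} {K : ℝ} (hK : 0 ≤ K) (hf : ∀ x y, |f x - f y| ≤ K * dist x y) :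
    |∫ x, f x ∂μ - ∫ x, f x ∂ν| ≤ K * c :=
  scale_lip (d := dist) (fun f hf => h f (lipschitz_one_of_abs hf)) hK hf

/-- Finite net of Lipschitz functions. -/
lemma W1_net [Nonempty X] {δ : ℝ} (hδ : 0 < δ) : ∃ (m : ℕ) (g : Fin m → X → ℝ),
    (∀ j, LipschitzWith 1 (g j)) ∧ ∀ μ ν : ProbabilityMeasure X,
      W1 μ ν ≤ ∑ j, |∫ x, g j x ∂(μ : Measure X) - ∫ x, g j x ∂(ν : Measure X)| + 2 * δ := by
  obtain ⟨x0⟩ := ‹Nonempty X›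
  set D := Metric.diam (Set.univ : Set X)
  let A : Set (BoundedContinuousFunction X ℝ) := {f | LipschitzWith 1 f ∧ f x0 = 0}
  have hA : IsCompact (closure A) := by
    refine BoundedContinuousFunction.arzela_ascoli (Set.Icc (-D) D) isCompact_Icc A ?_ ?_
    · intro f x hf
      have := hf.1.dist_le_mul x x0
      rw [Real.dist_eq, hf.2] at this
      have h2 := Metric.dist_le_diam_of_mem isCompact_univ.isBounded (Set.mem_univ x) (Set.mem_univ x0)
      simp at this
      exact abs_le.mp (this.trans h2)
    · exact (LipschitzWith.uniformEquicontinuous _ 1 fun f => f.2.1).equicontinuous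
  obtain ⟨t, htA, htf, hcov⟩ := exists_finite_cover_balls_of_isCompact_closure hA hδ
  obtain ⟨T, rfl⟩ : ∃ T : Finset (BoundedContinuousFunction X ℝ), (T : Set _) = t :=
    ⟨htf.toFinset, by simp⟩
  refine ⟨T.card, fun j => (T.equivFin.symm j : BoundedContinuousFunction X ℝ),
    fun j => (htA (T.equivFin.symm j).2).1, fun μ ν => W1_le fun f hf => ?_⟩
  let f' : BoundedContinuousFunction X ℝ :=
    BoundedContinuousFunction.mkOfCompact ⟨fun x => f x - f x0, hf.continuous.sub continuous_const⟩
  have hf' : f' ∈ A := by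
    refine ⟨lipschitz_one_of_abs fun x y => ?_, ?_⟩
    · have := hf.dist_le_mul x y
      rw [Real.dist_eq] at this
      simpa [f'] using this
    · simp [f']
  obtain ⟨g, hgT, hg⟩ := Set.mem_iUnion₂.mp (hcov hf')
  rw [Metric.mem_ball] at hg
  have hgl : LipschitzWith 1 g := (htA hgT).1
  have hclose : ∀ x, |f x - (g x + f x0)| ≤ δ := fun x => by
    have h1 := (BoundedContinuousFunction.dist_coe_le_dist (f := f') (g := g) x).trans hg.le
    rw [Real.dist_eq] at h1
    have : f' x = f x - f x0 := rfl
    rw [this] at h1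
    rwa [← sub_sub, sub_right_comm] 
  have h1 := abs_integral_sub_le_const (μ : Measure X) (lip_integrable hf _)
    ((lip_integrable hgl _).add (integrable_const (f x0))) hclose
  have h2 := abs_integral_sub_le_const (ν : Measure X) (lip_integrable hf _)
    ((lip_integrable hgl _).add (integrable_const (f x0))) hclose
  simp only [Pi.add_apply] at h1 h2
  rw [integral_add (lip_integrable hgl _) (integrable_const _)] at h1 h2
  simp only [integral_const, probReal_univ, one_smul] at h1 h2
  have h3 := Finset.single_le_sum (s := Finset.univ) (f := fun j => |∫ x, (T.equivFin.symm j : BoundedContinuousFunction X ℝ) x ∂(μ : Measure X) - ∫ x, (T.equivFin.symm j : BoundedContinuousFunction X ℝ) x ∂(ν : Measure X)|)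
    (fun _ _ => abs_nonneg _) (Finset.mem_univ (T.equivFin ⟨g, hgT⟩))
  simp only [Equiv.symm_apply_apply] at h3
  rw [abs_le] at h1 h2 ⊢
  have h4 := le_abs_self (∫ x, g x ∂(μ : Measure X) - ∫ x, g x ∂(ν : Measure X))
  have h5 := neg_abs_le (∫ x, g x ∂(μ : Measure X) - ∫ x, g x ∂(ν : Measure X))
  constructor <;> linarith [h1.1, h1.2, h2.1, h2.2]

end W1basic

section W1meas
variable {X : Type*} [MetricSpace X] [CompactSpace X] [MeasurableSpace X] [BorelSpace X]

lemma measurable_coePM : Measurable (fun μ : ProbabilityMeasure X => (μ : Measure X)) :=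
  measurable_subtype_coe

lemma measurable_integral_measure {A Y : Type*} [MeasurableSpace A] [MeasurableSpace Y]
    {κ : A → Measure Y} (hκ : Measurable κ) {f : Y → ℝ} (hf : Measurable f) :
    Measurable fun a => ∫ y, f y ∂(κ a) := by
  let K : ProbabilityTheory.Kernel A Y := ⟨κ, hκ⟩
  exact (hf.stronglyMeasurable.integral_kernel (κ := K)).measurable

lemma measurable_integral_param {A Y : Type*} [MeasurableSpace A] [MeasurableSpace Y]
    {κ : A → Measure Y} (hκ : Measurable κ) [∀ a, IsProbabilityMeasure (κ a)] {f : A × Y → ℝ}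
    (hf : Measurable f) :
    Measurable fun a => ∫ y, f (a, y) ∂(κ a) := by
  let K : ProbabilityTheory.Kernel A Y := ⟨κ, hκ⟩
  haveI : ProbabilityTheory.IsMarkovKernel K := ⟨fun a => ‹∀ a, IsProbabilityMeasure (κ a)› a⟩
  exact (hf.stronglyMeasurable.integral_kernel_prod_right' (κ := K)).measurable

lemma stronglyMeasurable_of_W1 {E : Type*} [SeminormedAddCommGroup E] [Nonempty X] {K : ℝ}
    {F : ProbabilityMeasure X → E} (hF : ∀ μ ν, ‖F μ - F ν‖ ≤ K * W1 μ ν) :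
    StronglyMeasurable F := by
  have hK : ∀ μ ν, ‖F μ - F ν‖ ≤ |K| * W1 μ ν := fun μ ν =>
    (hF μ ν).trans (mul_le_mul_of_nonneg_right (le_abs_self _) (W1_nonneg _ _))
  have hδ : ∀ n : ℕ, (0:ℝ) < 1 / ((n:ℝ) + 1) := fun n => by positivity
  haveI : Nonempty (ProbabilityMeasure X) :=
    ⟨⟨Measure.dirac (Classical.arbitrary X), inferInstance⟩⟩
  have key : ∀ n : ℕ, ∃ G : ProbabilityMeasure X → E, StronglyMeasurable G ∧
      ∀ μ, ‖G μ - F μ‖ ≤ |K| * (3 * (1 / ((n:ℝ) + 1))) := by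
    intro n
    obtain ⟨m, g, hg, hnet⟩ := W1_net (X := X) (hδ n)
    set δ := 1 / ((n:ℝ) + 1)
    have hδ' : 0 < δ := hδ n
    let φ : ProbabilityMeasure X → Fin m → ℤ := fun μ j =>
      ⌊((m:ℝ) + 1) / δ * ∫ x, g j x ∂(μ : Measure X)⌋
    have hφ : Measurable φ := by
      refine measurable_pi_lambda _ fun j => ?_
      exact Int.measurable_floor.comp ((measurable_integral_measure measurable_coePM
        (hg j).continuous.measurable).const_mul _)
    refine ⟨fun μ => F (Function.invFun φ (φ μ)), ?_, fun μ => ?_⟩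
    · have : StronglyMeasurable (fun k : Fin m → ℤ => F (Function.invFun φ k)) :=
        StronglyMeasurable.of_discrete
      exact this.comp_measurable hφ
    · refine (hK _ _).trans (mul_le_mul_of_nonneg_left ?_ (abs_nonneg _))
      set μ' := Function.invFun φ (φ μ)
      have hinv : φ μ' = φ μ := Function.invFun_eq ⟨μ, rfl⟩
      refine (hnet μ' μ).trans ?_
      have hj : ∀ j, |∫ x, g j x ∂(μ' : Measure X) - ∫ x, g j x ∂(μ : Measure X)| ≤ δ / ((m:ℝ)+1) := by
        intro j
        have h1 := Int.abs_sub_lt_one_of_floor_eq_floor (congrFun hinv j)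
        rw [← mul_sub, abs_mul, abs_of_pos (by positivity)] at h1
        rw [le_div_iff₀ (by positivity)]
        rw [div_mul_eq_mul_div, div_lt_one hδ'] at h1
        linarith
      have := Finset.sum_le_sum (s := Finset.univ) fun j (_ : j ∈ Finset.univ) => hj j
      simp only [Finset.sum_const, Finset.card_univ, Fintype.card_fin, nsmul_eq_mul] at this
      have h2 : (m:ℝ) * (δ / ((m:ℝ)+1)) ≤ δ := by
        rw [mul_div_assoc', div_le_iff₀ (by positivity)]; nlinarith
      linarith
  choose G hG hGF using key
  refine stronglyMeasurable_of_tendsto atTop hG (tendsto_pi_nhds.mpr fun μ => ?_)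
  rw [tendsto_iff_norm_sub_tendsto_zero]
  refine squeeze_zero (fun _ => norm_nonneg _) (fun n => hGF n μ) ?_
  have := (tendsto_one_div_add_atTop_nhds_zero_nat (𝕜 := ℝ)).const_mul (|K| * 3)
  simpa [mul_assoc] using this

lemma stronglyMeasurable_of_lip {E Z : Type*} [SeminormedAddCommGroup E] [Nonempty X]
    [MetricSpace Z] [CompactSpace Z] [MeasurableSpace Z] [BorelSpace Z]
    {K : ℝ} {F : Z × ProbabilityMeasure X → E}
    (hF : ∀ z z' μ ν, ‖F (z, μ) - F (z', ν)‖ ≤ K * (dist z z' + W1 μ ν)) :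
    StronglyMeasurable F := by
  have := stronglyMeasurable_uncurry_of_continuous_of_stronglyMeasurable (u := fun z μ => F (z, μ))
    (fun μ => ?_) (fun z => ?_)
  · exact this
  · refine (LipschitzWith.of_dist_le_mul (K := ⟨|K|, abs_nonneg K⟩) fun z z' => ?_).continuous
    rw [dist_eq_norm]
    refine (hF z z' μ μ).trans ?_
    rw [W1_self, add_zero]
    exact mul_le_mul_of_nonneg_right (le_abs_self _) dist_nonneg
  · refine stronglyMeasurable_of_W1 (K := K) fun μ ν => ?_
    simpa using hF z z μ ν

lemma measurable_kernel_of_lip {A Y : Type*} [MeasurableSpace A] [PseudoMetricSpace Y]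
    [MeasurableSpace Y] [BorelSpace Y] {κ : A → Measure Y} [hP : ∀ a, IsProbabilityMeasure (κ a)]
    (h : ∀ f : Y → ℝ, (∃ K, LipschitzWith K f) → Measurable fun a => ∫ y, f y ∂(κ a)) :
    Measurable κ := by
  refine Measurable.measure_of_isPiSystem_of_isProbabilityMeasure
    (S := {s | IsClosed s}) ?_ isPiSystem_isClosed ?_
  · rw [BorelSpace.measurable_eq (α := Y), borel_eq_generateFrom_isClosed]
  · intro s hs
    have h1 : ∀ a, (κ a) s = ENNReal.ofReal ((κ a).real s) := fun a => by simp
    simp_rw [h1]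
    refine Measurable.ennreal_ofReal ?_
    refine measurable_of_tendsto_metrizable (f := fun (n : ℕ) a =>
      ∫ y, ((thickenedIndicator (δ := (1:ℝ) / (n + 1)) (by positivity) s y : NNReal) : ℝ) ∂(κ a))
      (fun n => h _ ⟨_, lipschitzWith_thickenedIndicator (δ := (1 : ℝ) / (n + 1)) (by positivity) s⟩) ?_
    rw [tendsto_pi_nhds]
    intro a
    exact tendsto_integral_thickenedIndicator_of_isClosed (⟨κ a, hP a⟩ : ProbabilityMeasure Y) hs
      (δs := fun n : ℕ ↦ (1 : ℝ) / (n + 1))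
      (fun _ ↦ by positivity) tendsto_one_div_add_atTop_nhds_zero_nat

lemma measurable_kernel_of_lipschitz {Z Y : Type*} [Nonempty X] [MetricSpace Y] [CompactSpace Y]
    [MeasurableSpace Y] [BorelSpace Y]
    [MetricSpace Z] [CompactSpace Z] [MeasurableSpace Z] [BorelSpace Z] {M : ℝ}
    {κ : Z × ProbabilityMeasure X → ProbabilityMeasure Y}
    (h : ∀ z z' μ μ' (f : Y → ℝ), LipschitzWith 1 f →
      |∫ y, f y ∂(κ (z, μ) : Measure Y) - ∫ y, f y ∂(κ (z', μ') : Measure Y)| ≤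
        M * (dist z z' + W1 μ μ')) :
    Measurable fun q => (κ q : Measure Y) := by
  refine measurable_kernel_of_lip fun f ⟨K, hf⟩ => ?_
  refine (stronglyMeasurable_of_lip (K := K * M) fun z z' μ ν => ?_).measurable
  rw [Real.norm_eq_abs, mul_assoc]
  refine scale_lip' (h z z' μ ν) K.2 fun x y => ?_
  have := hf.dist_le_mul x y
  rwa [Real.dist_eq] at this

lemma measurable_bind_param {A B C : Type*} [MeasurableSpace A] [MeasurableSpace B]
    [MeasurableSpace C] {κ : A → Measure B} (hκ : Measurable κ) [hP : ∀ a, IsProbabilityMeasure (κ a)]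
    {η : A × B → Measure C} (hη : Measurable η) :
    Measurable fun a => (κ a).bind fun b => η (a, b) := by
  let K : ProbabilityTheory.Kernel A B := ⟨κ, hκ⟩
  haveI : ProbabilityTheory.IsMarkovKernel K := ⟨hP⟩
  rw [Measure.measurable_measure]
  intro s hs
  have : ∀ a, ((κ a).bind fun b => η (a, b)) s = ∫⁻ b, η (a, b) s ∂(K a) := fun a =>
    Measure.bind_apply hs (hη.comp measurable_prodMk_left).aemeasurable
  simp_rw [this]
  exact Measurable.lintegral_kernel_prod_right' (κ := K) ((Measure.measurable_coe hs).comp hη)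

lemma measurable_map_param {A B C : Type*} [MeasurableSpace A] [MeasurableSpace B]
    [MeasurableSpace C] {κ : A → Measure B} (hκ : Measurable κ) [hP : ∀ a, IsProbabilityMeasure (κ a)]
    {g : A × B → C} (hg : Measurable g) :
    Measurable fun a => (κ a).map fun b => g (a, b) := by
  have h := measurable_bind_param hκ (η := fun q => Measure.dirac (g q)) (Measure.measurable_dirac.comp hg)
  have : ∀ a, ((κ a).bind fun b => Measure.dirac (g (a, b))) = (κ a).map fun b => g (a, b) :=
    fun a => Measure.bind_dirac_eq_map _ (hg.comp measurable_prodMk_left)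
  simpa only [this] using h

lemma measurable_pi_param {A : Type*} {ι : Type*} [Fintype ι] [MeasurableSpace A]
    {ν : A → ι → Measure X} [hP : ∀ a i, IsProbabilityMeasure (ν a i)]
    (h : ∀ i, Measurable fun a => ν a i) : Measurable fun a => Measure.pi (ν a) := by
  refine Measurable.measure_of_isPiSystem_of_isProbabilityMeasure generateFrom_pi.symm isPiSystem_pi ?_
  rintro _ ⟨s, hs, rfl⟩
  simp only [Measure.pi_pi]
  exact Finset.measurable_prod _ fun i _ => (Measure.measurable_coe (hs i trivial)).comp (h i)

lemma isProb_bind {B C : Type*} [MeasurableSpace B] [MeasurableSpace C] {m : Measure B}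
    [IsProbabilityMeasure m] {η : B → Measure C} (hη : Measurable η)
    [hP : ∀ b, IsProbabilityMeasure (η b)] : IsProbabilityMeasure (m.bind η) := by
  constructor
  rw [Measure.bind_apply MeasurableSet.univ hη.aemeasurable]
  simp

lemma integral_bind_bdd {B C : Type*} [MeasurableSpace B] [MeasurableSpace C] {m : Measure B}
    [IsProbabilityMeasure m] {η : B → Measure C} (hη : Measurable η)
    [hP : ∀ b, IsProbabilityMeasure (η b)] {f : C → ℝ} (hf : Measurable f) {c : ℝ}
    (hb : ∀ x, |f x| ≤ c) : ∫ x, f x ∂(m.bind η) = ∫ b, ∫ x, f x ∂(η b) ∂m := by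
  let K : ProbabilityTheory.Kernel B C := ⟨η, hη⟩
  haveI : ProbabilityTheory.IsMarkovKernel K := ⟨hP⟩
  have e : m.bind η = (ProbabilityTheory.Kernel.comp K (ProbabilityTheory.Kernel.const Unit m)) () := by
    rw [ProbabilityTheory.Kernel.comp_apply, ProbabilityTheory.Kernel.const_apply]; rfl
  haveI := isProb_bind (m := m) hη
  have hi : Integrable f (m.bind η) := Integrable.of_bound hf.aestronglyMeasurable c (ae_of_all _ hb)
  rw [e] at hi ⊢
  rw [ProbabilityTheory.Kernel.integral_comp hi, ProbabilityTheory.Kernel.const_apply]; rfl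

lemma integrable_bdd {B : Type*} [MeasurableSpace B] {m : Measure B} [IsProbabilityMeasure m]
    {f : B → ℝ} (hf : Measurable f) {c : ℝ} (hb : ∀ x, |f x| ≤ c) : Integrable f m :=
  Integrable.of_bound hf.aestronglyMeasurable c (ae_of_all _ hb)

lemma abs_integral_le_bdd {B : Type*} [MeasurableSpace B] {m : Measure B} [IsProbabilityMeasure m]
    {f : B → ℝ} {c : ℝ} (hb : ∀ x, |f x| ≤ c) : |∫ x, f x ∂m| ≤ c := by
  have := norm_integral_le_of_norm_le_const (μ := m) (f := f) (C := c) (ae_of_all _ hb)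
  simpa using this

end W1meas

section EMP
variable {X : Type*} [MetricSpace X] [CompactSpace X] [MeasurableSpace X] [BorelSpace X] [Nonempty X]

lemma emp_coe {N : ℕ} (hN : N ≠ 0) (x : Fin N → X) :
    (emp N x : Measure X) = (N : ENNReal)⁻¹ • ∑ i : Fin N, Measure.dirac (x i) := by
  exact congrArg Subtype.val (dif_neg hN)

lemma measurable_emp (N : ℕ) : Measurable (emp N : (Fin N → X) → ProbabilityMeasure X) := by
  have h : Measurable fun x : Fin N → X => (emp N x : Measure X) := by
    by_cases hN : N = 0
    · subst hN
      exact measurable_const' fun x y => by rw [Subsingleton.elim x y]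
    · simp_rw [emp_coe hN]
      rw [Measure.measurable_measure]
      intro s hs
      simp only [Measure.smul_apply, Measure.coe_finsetSum, Finset.sum_apply, smul_eq_mul]
      refine Measurable.const_mul (Finset.measurable_sum _ fun i _ => ?_) _
      exact ((Measure.measurable_coe hs).comp Measure.measurable_dirac).comp (measurable_pi_apply i)
  exact h.subtype_mk (h := fun x => (emp N x).2)

lemma integral_avg {Y : Type*} [MeasurableSpace Y] {N : ℕ} (hN : N ≠ 0) (ν : Fin N → Measure Y)
    [∀ i, IsProbabilityMeasure (ν i)]
    {f : Y → ℝ} (hf : ∀ i, Integrable f (ν i)) :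
    ∫ y, f y ∂((N : ENNReal)⁻¹ • ∑ i, ν i) = (N:ℝ)⁻¹ * ∑ i, ∫ y, f y ∂(ν i) := by
  rw [integral_smul_measure, integral_finset_sum_measure fun i _ => hf i]
  simp

lemma integral_emp {N : ℕ} (hN : N ≠ 0) (x : Fin N → X) {f : X → ℝ} (hf : Continuous f) :
    ∫ y, f y ∂(emp N x : Measure X) = (N:ℝ)⁻¹ * ∑ i, f (x i) := by
  rw [emp_coe hN, integral_avg hN _ fun i => ?_]
  · simp
  · exact integrable_dirac (by simp [enorm_lt_top])

def LLN (X : Type*) [MetricSpace X] [MeasurableSpace X] [Nonempty X] (N : ℕ) (ε : ℝ) : Prop :=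
  ∀ (ν : Fin N → Measure X) (_ : ∀ i, IsProbabilityMeasure (ν i)) (ρ : ProbabilityMeasure X),
    (ρ : Measure X) = (N : ENNReal)⁻¹ • ∑ i, ν i →
    ∫ y, W1 (emp N y) ρ ∂(Measure.pi ν) ≤ ε

lemma lln_one {N : ℕ} (hN : N ≠ 0) {g : X → ℝ} (hg : LipschitzWith 1 g) (ν : Fin N → Measure X)
    [∀ i, IsProbabilityMeasure (ν i)] (ρ : ProbabilityMeasure X)
    (hρ : (ρ : Measure X) = (N : ENNReal)⁻¹ • ∑ i, ν i) {κ : ℝ} (hκ : 0 < κ) :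
    ∫ y, |∫ x, g x ∂(emp N y : Measure X) - ∫ x, g x ∂(ρ : Measure X)| ∂(Measure.pi ν) ≤
      κ + (Metric.diam (Set.univ : Set X)) ^ 2 / (N * κ) := by
  set D := Metric.diam (Set.univ : Set X)
  have hmem : ∀ i, MemLp g 2 (ν i) := fun i => by
    obtain ⟨C, hC⟩ := isCompact_univ.exists_bound_of_continuousOn hg.continuous.continuousOn
    exact MemLp.of_bound hg.continuous.aestronglyMeasurable C (ae_of_all _ fun x => hC x trivial)
  set S : (Fin N → X) → ℝ := ∑ i, fun ω => g (ω i) with hS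
  have hSmem : MemLp S 2 (Measure.pi ν) := by
    refine memLp_finset_sum' _ fun i _ => ?_
    exact (hmem i).comp_measurePreserving (measurePreserving_eval _ i)
  have hvar := ProbabilityTheory.variance_sum_pi (μ := ν) (X := fun _ => g) hmem
  have hvi : ∀ i, ProbabilityTheory.variance g (ν i) ≤ D ^ 2 := fun i => by
    let x0 := Classical.arbitrary X
    have := ProbabilityTheory.variance_le_sq_of_bounded (μ := ν i) (X := g) (a := g x0 - D) (b := g x0 + D)
      (ae_of_all _ fun x => ?_) hg.continuous.aemeasurable
    · refine this.trans (le_of_eq (by ring))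
    · have := hg.dist_le_mul x x0
      rw [Real.dist_eq] at this
      have h2 := Metric.dist_le_diam_of_mem isCompact_univ.isBounded (Set.mem_univ x) (Set.mem_univ x0)
      simp at this
      have := abs_le.mp (this.trans h2)
      constructor <;> linarith [this.1, this.2]
  have hvS : ProbabilityTheory.variance S (Measure.pi ν) ≤ N * D ^ 2 := by
    rw [hvar]
    refine (Finset.sum_le_sum fun i _ => hvi i).trans ?_
    simp
  have hES : ∫ y, S y ∂(Measure.pi ν) = ∑ i, ∫ x, g x ∂(ν i) := by
    simp only [hS, Finset.sum_apply]
    rw [integral_finset_sum]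
    · refine Finset.sum_congr rfl fun i _ => ?_
      rw [← (measurePreserving_eval ν i).map_eq, integral_map (measurable_pi_apply i).aemeasurable
        hg.continuous.aestronglyMeasurable]
    · intro i _
      have := (hmem i).integrable (by norm_num)
      exact (measurePreserving_eval ν i).integrable_comp_of_integrable this
  set m := ∫ y, S y ∂(Measure.pi ν) with hm
  have hid : ∀ y, ∫ x, g x ∂(emp N y : Measure X) - ∫ x, g x ∂(ρ : Measure X) = (N:ℝ)⁻¹ * (S y - m) := by
    intro y
    rw [integral_emp hN y hg.continuous, hρ, integral_avg hN ν fun i => (hmem i).integrable (by norm_num),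
      hES, mul_sub]
    simp [hS]
  simp_rw [hid]
  have hNpos : (0:ℝ) < N := by positivity
  have hSm : MemLp (fun y => S y - m) 2 (Measure.pi ν) := hSmem.sub (memLp_const m)
  have hsq : Integrable (fun y => (S y - m)^2) (Measure.pi ν) := hSm.integrable_sq
  have hvE : ∫ y, (S y - m)^2 ∂(Measure.pi ν) ≤ N * D ^ 2 := by
    rw [ProbabilityTheory.variance_eq_integral hSmem.aestronglyMeasurable.aemeasurable] at hvS
    exact hvS
  calc ∫ y, |(N:ℝ)⁻¹ * (S y - m)| ∂(Measure.pi ν) 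
      ≤ ∫ y, (κ + κ⁻¹ * (((N:ℝ)⁻¹)^2 * (S y - m)^2)) ∂(Measure.pi ν) := by
        refine integral_mono ?_ ?_ fun y => ?_
        · exact ((hSm.integrable (by norm_num)).const_mul _).abs
        · exact (integrable_const _).add ((hsq.const_mul _).const_mul _)
        · simp only
          rw [← mul_pow, ← sq_abs]
          set w := |(N:ℝ)⁻¹ * (S y - m)|
          have hw : 0 ≤ w := abs_nonneg _
          rw [← sub_nonneg]
          have : κ + κ⁻¹ * w^2 - w = κ⁻¹ * ((w - κ/2)^2 + 3/4 * κ^2) := by field_simp; ring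
          rw [this]; positivity
    _ = κ + κ⁻¹ * (((N:ℝ)⁻¹)^2 * ∫ y, (S y - m)^2 ∂(Measure.pi ν)) := by
        rw [integral_add (integrable_const _) ((hsq.const_mul _).const_mul _), integral_const_mul,
          integral_const_mul]
        simp
    _ ≤ κ + κ⁻¹ * (((N:ℝ)⁻¹)^2 * (N * D^2)) := by gcongr
    _ = _ := by field_simp

lemma measurable_W1_emp {N : ℕ} (ρ : ProbabilityMeasure X) :
    Measurable fun y : Fin N → X => W1 (emp N y) ρ := by
  have : StronglyMeasurable fun μ : ProbabilityMeasure X => W1 μ ρ :=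
    stronglyMeasurable_of_W1 (K := 1) fun μ ν => by
      rw [Real.norm_eq_abs, abs_le, one_mul]
      constructor
      · linarith [W1_triangle ν μ ρ, W1_comm μ ν]
      · linarith [W1_triangle μ ν ρ]
  exact this.measurable.comp (measurable_emp N)

lemma abs_W1_le (μ ν : ProbabilityMeasure X) : |W1 μ ν| ≤ 2 * Metric.diam (Set.univ : Set X) := by
  rw [abs_of_nonneg (W1_nonneg _ _)]; exact W1_le_diam _ _

lemma lln {ε : ℝ} (hε : 0 < ε) : ∃ N0 : ℕ, N0 ≠ 0 ∧ ∀ N ≥ N0, LLN X N ε := by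
  obtain ⟨k, g, hg, hnet⟩ := W1_net (X := X) (δ := ε / 8) (by positivity)
  set D := Metric.diam (Set.univ : Set X)
  set κ := ε / (4 * ((k:ℝ) + 1)) with hκ
  have hκ0 : 0 < κ := by positivity
  obtain ⟨N1, hN1⟩ := exists_nat_ge (D^2 / κ^2)
  refine ⟨N1 + 1, by omega, fun N hN ν hν ρ hρ => ?_⟩
  have hN0 : N ≠ 0 := by omega
  have hNpos : (0:ℝ) < N := by positivity
  have h1 : D^2 / (N * κ) ≤ κ := by
    rw [div_le_iff₀ (by positivity)]
    rw [div_le_iff₀ (by positivity)] at hN1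
    have : (N1:ℝ) ≤ N := by exact_mod_cast (by omega : N1 ≤ N)
    nlinarith [mul_le_mul_of_nonneg_right this (by positivity : 0 ≤ κ^2)]
  have hint : ∀ j, Integrable (fun y : Fin N → X => |∫ x, g j x ∂(emp N y : Measure X) - ∫ x, g j x ∂(ρ : Measure X)|) (Measure.pi ν) := fun j => by
    refine integrable_bdd (c := 2 * D) ?_ fun y => ?_
    · refine ((Measurable.sub ?_ measurable_const)).abs
      exact measurable_integral_measure (measurable_coePM.comp (measurable_emp N)) (hg j).continuous.measurable
    · rw [abs_abs]; exact W1_term_le _ _ (hg j)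
  calc ∫ y, W1 (emp N y) ρ ∂(Measure.pi ν) 
      ≤ ∫ y, (∑ j, |∫ x, g j x ∂(emp N y : Measure X) - ∫ x, g j x ∂(ρ : Measure X)| + 2 * (ε/8)) ∂(Measure.pi ν) := by
        refine integral_mono (integrable_bdd (measurable_W1_emp ρ) fun y => abs_W1_le _ _) ?_ fun y => hnet _ _
        exact (integrable_finset_sum _ fun j _ => hint j).add (integrable_const _)
    _ = ∑ j, ∫ y, |∫ x, g j x ∂(emp N y : Measure X) - ∫ x, g j x ∂(ρ : Measure X)| ∂(Measure.pi ν) + 2 * (ε/8) := by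
        rw [integral_add (integrable_finset_sum _ fun j _ => hint j) (integrable_const _),
          integral_finset_sum _ fun j _ => hint j]
        simp
    _ ≤ ∑ j : Fin k, (2 * κ) + 2 * (ε/8) := by
        gcongr with j
        exact (lln_one hN0 (hg j) ν ρ hρ hκ0).trans (by linarith)
    _ ≤ ε := by
        simp only [Finset.sum_const, Finset.card_univ, Fintype.card_fin, nsmul_eq_mul]
        have : (k:ℝ) * (2 * κ) ≤ ε / 2 := by
          rw [hκ]
          rw [mul_div_assoc', mul_div_assoc', div_le_iff₀ (by positivity)]
          nlinarith
        linarith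

end EMP

section SYS
variable {X U X0 U0 Xi : Type*}
    [MetricSpace X] [CompactSpace X] [MeasurableSpace X] [BorelSpace X] [Nonempty X]
    [MetricSpace U] [CompactSpace U] [MeasurableSpace U] [BorelSpace U]
    [MetricSpace X0] [CompactSpace X0] [MeasurableSpace X0] [BorelSpace X0]
    [MetricSpace U0] [CompactSpace U0] [MeasurableSpace U0] [BorelSpace U0]
    [MetricSpace Xi] [CompactSpace Xi] [MeasurableSpace Xi] [BorelSpace Xi]

/-- The sum distance on the limiting state-action space. -/
noncomputable def dS (s s' : X0 × (U0 × Xi) × ProbabilityMeasure X) : ℝ :=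
  dist s.1 s'.1 + dist s.2.1.1 s'.2.1.1 + dist s.2.1.2 s'.2.1.2 + W1 s.2.2 s'.2.2

def LipS (L : ℝ) (f : X0 × (U0 × Xi) × ProbabilityMeasure X → ℝ) : Prop :=
  ∀ s s', |f s - f s'| ≤ L * dS s s'

lemma dS_nonneg (s s' : X0 × (U0 × Xi) × ProbabilityMeasure X) : 0 ≤ dS s s' := by
  unfold dS
  have := W1_nonneg s.2.2 s'.2.2
  positivity

lemma dist_le_dm {Y : Type*} [MetricSpace Y] [CompactSpace Y] (x y : Y) :
    dist x y ≤ Metric.diam (Set.univ : Set Y) :=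
  Metric.dist_le_diam_of_mem isCompact_univ.isBounded (Set.mem_univ x) (Set.mem_univ y)

lemma dS_bdd : ∃ D : ℝ, 0 ≤ D ∧ ∀ s s' : X0 × (U0 × Xi) × ProbabilityMeasure X, dS s s' ≤ D := by
  refine ⟨Metric.diam (Set.univ : Set X0) + Metric.diam (Set.univ : Set U0) +
    Metric.diam (Set.univ : Set Xi) + 2 * Metric.diam (Set.univ : Set X), by
      have h1 := Metric.diam_nonneg (s := (Set.univ : Set X0))
      have h2 := Metric.diam_nonneg (s := (Set.univ : Set U0))
      have h3 := Metric.diam_nonneg (s := (Set.univ : Set Xi))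
      have h4 := Metric.diam_nonneg (s := (Set.univ : Set X))
      linarith, fun s s' => ?_⟩
  unfold dS
  linarith [dist_le_dm s.1 s'.1, dist_le_dm s.2.1.1 s'.2.1.1, dist_le_dm s.2.1.2 s'.2.1.2,
    W1_le_diam s.2.2 s'.2.2]

lemma stronglyMeasurable_of_dS {E : Type*} [SeminormedAddCommGroup E] {L : ℝ}
    {f : X0 × (U0 × Xi) × ProbabilityMeasure X → E} (hf : ∀ s s', ‖f s - f s'‖ ≤ L * dS s s') :
    StronglyMeasurable f := by
  have h : StronglyMeasurable (fun q : (X0 × U0 × Xi) × ProbabilityMeasure X =>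
      f (q.1.1, (q.1.2.1, q.1.2.2), q.2)) := by
    refine stronglyMeasurable_of_lip (K := 3 * |L|) fun z z' μ ν => ?_
    refine (hf _ _).trans ?_
    have h0 := dS_nonneg ((z.1, (z.2.1, z.2.2), μ) : X0 × (U0 × Xi) × ProbabilityMeasure X)
      (z'.1, (z'.2.1, z'.2.2), ν)
    refine (mul_le_mul_of_nonneg_right (le_abs_self L) h0).trans ?_
    rw [mul_comm 3, mul_assoc]
    refine mul_le_mul_of_nonneg_left ?_ (abs_nonneg _)
    unfold dS
    simp only
    have h1 : dist z.1 z'.1 ≤ dist z z' := le_max_left _ _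
    have h2 : dist z.2 z'.2 ≤ dist z z' := le_max_right _ _
    have h3 : dist z.2.1 z'.2.1 ≤ dist z.2 z'.2 := le_max_left _ _
    have h4 : dist z.2.2 z'.2.2 ≤ dist z.2 z'.2 := le_max_right _ _
    have := W1_nonneg μ ν
    linarith
  exact h.comp_measurable (g := fun s : X0 × (U0 × Xi) × ProbabilityMeasure X =>
    (((s.1, s.2.1.1, s.2.1.2), s.2.2) : (X0 × U0 × Xi) × ProbabilityMeasure X)) (by fun_prop)

lemma LipS.measurable {L : ℝ} {f : X0 × (U0 × Xi) × ProbabilityMeasure X → ℝ} (hf : LipS L f) :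
    Measurable f := (stronglyMeasurable_of_dS (f := f) (L := L) (fun s s' => by
    rw [Real.norm_eq_abs]; exact hf s s')).measurable

lemma LipS.bdd {L : ℝ} {f : X0 × (U0 × Xi) × ProbabilityMeasure X → ℝ} (hf : LipS L f) :
    ∃ c, ∀ s, |f s| ≤ c := by
  obtain ⟨D, hD0, hD⟩ := dS_bdd (X := X) (X0 := X0) (U0 := U0) (Xi := Xi)
  rcases isEmpty_or_nonempty (X0 × (U0 × Xi) × ProbabilityMeasure X) with h | ⟨⟨s0⟩⟩
  · exact ⟨0, fun s => h.elim s⟩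
  · refine ⟨|f s0| + |L| * D, fun s => ?_⟩
    have h1 := hf s s0
    have h2 : L * dS s s0 ≤ |L| * D := by
      refine (mul_le_mul_of_nonneg_right (le_abs_self L) (dS_nonneg _ _)).trans ?_
      exact mul_le_mul_of_nonneg_left (hD _ _) (abs_nonneg _)
    have h3 : |f s| ≤ |f s - f s0| + |f s0| := by
      have := abs_add_le (f s - f s0) (f s0); simpa using this
    linarith

lemma LipS.integrable {L : ℝ} {f : X0 × (U0 × Xi) × ProbabilityMeasure X → ℝ} (hf : LipS L f)
    (m : Measure (X0 × (U0 × Xi) × ProbabilityMeasure X)) [IsProbabilityMeasure m] :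
    Integrable f m := by
  obtain ⟨c, hc⟩ := hf.bdd
  exact integrable_bdd hf.measurable hc

/-- All Lipschitz hypotheses, for a fixed policy, with a single constant. -/
structure Hyp (M : ℝ)
    (p : X → U → X0 → U0 → ProbabilityMeasure X → ProbabilityMeasure X)
    (p0 : X0 → U0 → ProbabilityMeasure X → ProbabilityMeasure X0)
    (Γ : Xi → X → ProbabilityMeasure U)
    (pt : X0 → ProbabilityMeasure X → ProbabilityMeasure (U0 × Xi))
    (TG : X0 → U0 → Xi → ProbabilityMeasure X → ProbabilityMeasure X) : Prop where
  one_le : 1 ≤ M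
  hp : ∀ (x x' : X) (u u' : U) (x0 x0' : X0) (u0 u0' : U0)
        (μ μ' : ProbabilityMeasure X) (f : X → ℝ), LipschitzWith 1 f →
      |∫ y, f y ∂(p x u x0 u0 μ : Measure X) - ∫ y, f y ∂(p x' u' x0' u0' μ' : Measure X)|
        ≤ M * (dist x x' + dist u u' + dist x0 x0' + dist u0 u0' + W1 μ μ')
  hp0 : ∀ (x0 x0' : X0) (u0 u0' : U0) (μ μ' : ProbabilityMeasure X) (f : X0 → ℝ),
        LipschitzWith 1 f →
      |∫ y, f y ∂(p0 x0 u0 μ : Measure X0) - ∫ y, f y ∂(p0 x0' u0' μ' : Measure X0)|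
        ≤ M * (dist x0 x0' + dist u0 u0' + W1 μ μ')
  hΓ : ∀ (ξ ξ' : Xi) (x x' : X) (g : U → ℝ), LipschitzWith 1 g →
      |∫ u, g u ∂(Γ ξ x : Measure U) - ∫ u, g u ∂(Γ ξ' x' : Measure U)|
        ≤ M * (dist ξ ξ' + dist x x')
  hpt : ∀ (x0 x0' : X0) (μ μ' : ProbabilityMeasure X) (g : U0 × Xi → ℝ),
      (∀ a b : U0 × Xi, |g a - g b| ≤ dist a.1 b.1 + dist a.2 b.2) →
      |∫ a, g a ∂(pt x0 μ : Measure (U0 × Xi)) - ∫ a, g a ∂(pt x0' μ' : Measure (U0 × Xi))|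
        ≤ M * (dist x0 x0' + W1 μ μ')
  hTG : ∀ (x0 : X0) (u0 : U0) (ξ : Xi) (μ : ProbabilityMeasure X),
      (TG x0 u0 ξ μ : Measure X) = (μ : Measure X).bind fun x =>
        ((Γ ξ x : Measure U)).bind fun u => (p x u x0 u0 μ : Measure X)

namespace Hyp
variable {M : ℝ}
    {p : X → U → X0 → U0 → ProbabilityMeasure X → ProbabilityMeasure X}
    {p0 : X0 → U0 → ProbabilityMeasure X → ProbabilityMeasure X0}
    {Γ : Xi → X → ProbabilityMeasure U}
    {pt : X0 → ProbabilityMeasure X → ProbabilityMeasure (U0 × Xi)}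
    {TG : X0 → U0 → Xi → ProbabilityMeasure X → ProbabilityMeasure X}

lemma M0 (H : Hyp M p p0 Γ pt TG) : 0 ≤ M := zero_le_one.trans H.one_le

lemma meas_p (H : Hyp M p p0 Γ pt TG) : Measurable fun q : (X × U × X0 × U0) × ProbabilityMeasure X =>
    (p q.1.1 q.1.2.1 q.1.2.2.1 q.1.2.2.2 q.2 : Measure X) := by
  refine measurable_kernel_of_lipschitz (M := 4 * M)
    (κ := fun q : (X × U × X0 × U0) × ProbabilityMeasure X => p q.1.1 q.1.2.1 q.1.2.2.1 q.1.2.2.2 q.2) fun z z' μ μ' f hf => ?_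
  refine (H.hp _ _ _ _ _ _ _ _ _ _ f hf).trans ?_
  rw [mul_comm 4, mul_assoc]
  refine mul_le_mul_of_nonneg_left ?_ H.M0
  have h1 : dist z.1 z'.1 ≤ dist z z' := le_max_left _ _
  have h2 : dist z.2 z'.2 ≤ dist z z' := le_max_right _ _
  have h3 : dist z.2.1 z'.2.1 ≤ dist z.2 z'.2 := le_max_left _ _
  have h4 : dist z.2.2 z'.2.2 ≤ dist z.2 z'.2 := le_max_right _ _
  have h5 : dist z.2.2.1 z'.2.2.1 ≤ dist z.2.2 z'.2.2 := le_max_left _ _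
  have h6 : dist z.2.2.2 z'.2.2.2 ≤ dist z.2.2 z'.2.2 := le_max_right _ _
  have := W1_nonneg μ μ'
  linarith

lemma meas_p0 (H : Hyp M p p0 Γ pt TG) : Measurable fun q : (X0 × U0) × ProbabilityMeasure X =>
    (p0 q.1.1 q.1.2 q.2 : Measure X0) := by
  refine measurable_kernel_of_lipschitz (M := 2 * M)
    (κ := fun q : (X0 × U0) × ProbabilityMeasure X => p0 q.1.1 q.1.2 q.2) fun z z' μ μ' f hf => ?_
  refine (H.hp0 _ _ _ _ _ _ f hf).trans ?_
  rw [mul_comm 2, mul_assoc]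
  refine mul_le_mul_of_nonneg_left ?_ H.M0
  have h1 : dist z.1 z'.1 ≤ dist z z' := le_max_left _ _
  have h2 : dist z.2 z'.2 ≤ dist z z' := le_max_right _ _
  have := W1_nonneg μ μ'
  linarith

lemma meas_pt (H : Hyp M p p0 Γ pt TG) : Measurable fun q : X0 × ProbabilityMeasure X =>
    (pt q.1 q.2 : Measure (U0 × Xi)) := by
  refine measurable_kernel_of_lipschitz (M := M)
    (κ := fun q : X0 × ProbabilityMeasure X => pt q.1 q.2) fun z z' μ μ' f hf => ?_
  refine H.hpt _ _ _ _ f fun a b => ?_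
  have := hf.dist_le_mul a b
  rw [Real.dist_eq] at this
  simp only [NNReal.coe_one, one_mul] at this
  refine this.trans ?_
  rw [Prod.dist_eq]
  exact max_le (by linarith [dist_nonneg (x := a.2) (y := b.2)]) (by linarith [dist_nonneg (x := a.1) (y := b.1)])

lemma meas_Γ (H : Hyp M p p0 Γ pt TG) : Measurable fun q : Xi × X => (Γ q.1 q.2 : Measure U) := by
  refine measurable_kernel_of_lip fun f ⟨K, hf⟩ => ?_
  refine (LipschitzWith.of_dist_le_mul (K := K * (2 * ⟨M, H.M0⟩)) fun z z' => ?_).continuous.measurable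
  rw [Real.dist_eq]
  have := scale_lip' (H.hΓ z.1 z'.1 z.2 z'.2) K.2 (f := f) fun x y => by
    have := hf.dist_le_mul x y
    rwa [Real.dist_eq] at this
  refine this.trans ?_
  have h1 : dist z.1 z'.1 ≤ dist z z' := le_max_left _ _
  have h2 : dist z.2 z'.2 ≤ dist z z' := le_max_right _ _
  have e : ((K * (2 * ⟨M, H.M0⟩) : NNReal) : ℝ) = K * (2 * M) := rfl
  rw [e, mul_assoc]
  refine mul_le_mul_of_nonneg_left ?_ K.2
  rw [mul_comm 2, mul_assoc]
  exact mul_le_mul_of_nonneg_left (by linarith) H.M0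

end Hyp

/-- One-agent transition. -/
noncomputable def nuM (p : X → U → X0 → U0 → ProbabilityMeasure X → ProbabilityMeasure X)
    (Γ : Xi → X → ProbabilityMeasure U) (x : X) (x0 : X0) (u0 : U0) (ξ : Xi)
    (μ : ProbabilityMeasure X) : Measure X :=
  (Γ ξ x : Measure U).bind fun u => (p x u x0 u0 μ : Measure X)

noncomputable def limKer
    (p0 : X0 → U0 → ProbabilityMeasure X → ProbabilityMeasure X0)
    (pt : X0 → ProbabilityMeasure X → ProbabilityMeasure (U0 × Xi))
    (TG : X0 → U0 → Xi → ProbabilityMeasure X → ProbabilityMeasure X)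
    (s : X0 × (U0 × Xi) × ProbabilityMeasure X) :
    Measure (X0 × (U0 × Xi) × ProbabilityMeasure X) :=
  ((p0 s.1 s.2.1.1 s.2.2 : Measure X0)).bind fun y0 =>
        ((pt y0 (TG s.1 s.2.1.1 s.2.1.2 s.2.2) : Measure (U0 × Xi))).map
          fun a => (y0, a, TG s.1 s.2.1.1 s.2.1.2 s.2.2)

noncomputable def nKer
    (p : X → U → X0 → U0 → ProbabilityMeasure X → ProbabilityMeasure X)
    (p0 : X0 → U0 → ProbabilityMeasure X → ProbabilityMeasure X0)
    (Γ : Xi → X → ProbabilityMeasure U)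
    (pt : X0 → ProbabilityMeasure X → ProbabilityMeasure (U0 × Xi)) (N : ℕ)
    (s : X0 × (U0 × Xi) × (Fin N → X)) : Measure (X0 × (U0 × Xi) × (Fin N → X)) :=
  (((p0 s.1 s.2.1.1 (emp N s.2.2) : Measure X0)).prod
        (Measure.pi fun i => nuM p Γ (s.2.2 i) s.1 s.2.1.1 s.2.1.2 (emp N s.2.2))).bind
        fun y => ((pt y.1 (emp N y.2) : Measure (U0 × Xi))).map fun a => (y.1, a, y.2)

noncomputable def eN {N : ℕ} (s : X0 × (U0 × Xi) × (Fin N → X)) : X0 × (U0 × Xi) × ProbabilityMeasure X :=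
  (s.1, s.2.1, emp N s.2.2)

lemma measurable_eN {N : ℕ} :
    Measurable (eN : X0 × (U0 × Xi) × (Fin N → X) → X0 × (U0 × Xi) × ProbabilityMeasure X) :=
  measurable_fst.prodMk ((measurable_fst.comp measurable_snd).prodMk
    ((measurable_emp N).comp (measurable_snd.comp measurable_snd)))

namespace Hyp
variable {M : ℝ}
    {p : X → U → X0 → U0 → ProbabilityMeasure X → ProbabilityMeasure X}
    {p0 : X0 → U0 → ProbabilityMeasure X → ProbabilityMeasure X0}
    {Γ : Xi → X → ProbabilityMeasure U}
    {pt : X0 → ProbabilityMeasure X → ProbabilityMeasure (U0 × Xi)}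
    {TG : X0 → U0 → Xi → ProbabilityMeasure X → ProbabilityMeasure X}

lemma meas_p_u (H : Hyp M p p0 Γ pt TG) (x : X) (x0 : X0) (u0 : U0) (μ : ProbabilityMeasure X) :
    Measurable fun u => (p x u x0 u0 μ : Measure X) :=
  H.meas_p.comp (g := fun q : (X × U × X0 × U0) × ProbabilityMeasure X =>
    (p q.1.1 q.1.2.1 q.1.2.2.1 q.1.2.2.2 q.2 : Measure X))
    (f := fun u : U => (((x, u, x0, u0), μ) : (X × U × X0 × U0) × ProbabilityMeasure X)) (by fun_prop)

lemma prob_nu (H : Hyp M p p0 Γ pt TG) (x : X) (x0 : X0) (u0 : U0) (ξ : Xi)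
    (μ : ProbabilityMeasure X) : IsProbabilityMeasure (nuM p Γ x x0 u0 ξ μ) :=
  isProb_bind (H.meas_p_u _ _ _ _)

lemma meas_nu (H : Hyp M p p0 Γ pt TG) :
    Measurable fun q : X × (X0 × (U0 × Xi) × ProbabilityMeasure X) =>
      nuM p Γ q.1 q.2.1 q.2.2.1.1 q.2.2.1.2 q.2.2.2 := by
  refine measurable_bind_param (κ := fun q : X × (X0 × (U0 × Xi) × ProbabilityMeasure X) =>
    (Γ q.2.2.1.2 q.1 : Measure U)) ?_
    (η := fun r => (p r.1.1 r.2 r.1.2.1 r.1.2.2.1.1 r.1.2.2.2 : Measure X)) ?_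
  · exact H.meas_Γ.comp (g := fun q : Xi × X => (Γ q.1 q.2 : Measure U))
      (f := fun q : X × (X0 × (U0 × Xi) × ProbabilityMeasure X) => (q.2.2.1.2, q.1)) (by fun_prop)
  · exact H.meas_p.comp (g := fun q : (X × U × X0 × U0) × ProbabilityMeasure X =>
      (p q.1.1 q.1.2.1 q.1.2.2.1 q.1.2.2.2 q.2 : Measure X))
      (f := fun r : (X × (X0 × (U0 × Xi) × ProbabilityMeasure X)) × U =>
        (((r.1.1, r.2, r.1.2.1, r.1.2.2.1.1), r.1.2.2.2) : (X × U × X0 × U0) × ProbabilityMeasure X))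
      (by fun_prop)

lemma meas_nu_x (H : Hyp M p p0 Γ pt TG) (x0 : X0) (u0 : U0) (ξ : Xi)
    (μ : ProbabilityMeasure X) : Measurable fun x => nuM p Γ x x0 u0 ξ μ :=
  H.meas_nu.comp (g := fun q : X × (X0 × (U0 × Xi) × ProbabilityMeasure X) =>
      nuM p Γ q.1 q.2.1 q.2.2.1.1 q.2.2.1.2 q.2.2.2) (f := fun x : X => (x, (x0, (u0, ξ), μ)))
      (by fun_prop)

lemma meas_TG (H : Hyp M p p0 Γ pt TG) :
    Measurable fun s : X0 × (U0 × Xi) × ProbabilityMeasure X => TG s.1 s.2.1.1 s.2.1.2 s.2.2 := by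
  have h : Measurable fun s : X0 × (U0 × Xi) × ProbabilityMeasure X =>
      (TG s.1 s.2.1.1 s.2.1.2 s.2.2 : Measure X) := by
    simp_rw [H.hTG]
    refine measurable_bind_param (κ := fun s : X0 × (U0 × Xi) × ProbabilityMeasure X =>
      (s.2.2 : Measure X)) ?_ (η := fun r => nuM p Γ r.2 r.1.1 r.1.2.1.1 r.1.2.1.2 r.1.2.2) ?_
    · exact measurable_coePM.comp (measurable_snd.comp measurable_snd)
    · exact H.meas_nu.comp (g := fun q : X × (X0 × (U0 × Xi) × ProbabilityMeasure X) =>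
        nuM p Γ q.1 q.2.1 q.2.2.1.1 q.2.2.1.2 q.2.2.2)
        (f := fun r : (X0 × (U0 × Xi) × ProbabilityMeasure X) × X => (r.2, r.1)) (by fun_prop)
  exact h.subtype_mk (h := fun s => (TG s.1 s.2.1.1 s.2.1.2 s.2.2).2)

lemma meas_limInner (H : Hyp M p p0 Γ pt TG) :
    Measurable fun r : (X0 × (U0 × Xi) × ProbabilityMeasure X) × X0 =>
      ((pt r.2 (TG r.1.1 r.1.2.1.1 r.1.2.1.2 r.1.2.2) : Measure (U0 × Xi))).map
          fun a => (r.2, a, TG r.1.1 r.1.2.1.1 r.1.2.1.2 r.1.2.2) := by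
  have hTG := H.meas_TG
  refine measurable_map_param (κ := fun r : (X0 × (U0 × Xi) × ProbabilityMeasure X) × X0 =>
      ((pt r.2 (TG r.1.1 r.1.2.1.1 r.1.2.1.2 r.1.2.2) : Measure (U0 × Xi)))) ?_
      (g := fun q : ((X0 × (U0 × Xi) × ProbabilityMeasure X) × X0) × (U0 × Xi) => (q.1.2, q.2, TG q.1.1.1 q.1.1.2.1.1 q.1.1.2.1.2 q.1.1.2.2)) ?_
  · have hT : Measurable fun r : (X0 × (U0 × Xi) × ProbabilityMeasure X) × X0 =>
        TG r.1.1 r.1.2.1.1 r.1.2.1.2 r.1.2.2 :=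
      hTG.comp (g := fun s : X0 × (U0 × Xi) × ProbabilityMeasure X => TG s.1 s.2.1.1 s.2.1.2 s.2.2)
        (f := Prod.fst) measurable_fst
    have h2 : Measurable fun r : (X0 × (U0 × Xi) × ProbabilityMeasure X) × X0 =>
        (r.2, TG r.1.1 r.1.2.1.1 r.1.2.1.2 r.1.2.2) := measurable_snd.prodMk hT
    exact H.meas_pt.comp (g := fun q : X0 × ProbabilityMeasure X => (pt q.1 q.2 : Measure (U0 × Xi)))
      (f := fun r : (X0 × (U0 × Xi) × ProbabilityMeasure X) × X0 =>
        (r.2, TG r.1.1 r.1.2.1.1 r.1.2.1.2 r.1.2.2)) h2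
  · have hT : Measurable fun q : ((X0 × (U0 × Xi) × ProbabilityMeasure X) × X0) × (U0 × Xi) =>
        TG q.1.1.1 q.1.1.2.1.1 q.1.1.2.1.2 q.1.1.2.2 :=
      hTG.comp (g := fun s : X0 × (U0 × Xi) × ProbabilityMeasure X => TG s.1 s.2.1.1 s.2.1.2 s.2.2)
        (f := fun q : ((X0 × (U0 × Xi) × ProbabilityMeasure X) × X0) × (U0 × Xi) => q.1.1)
        (measurable_fst.comp measurable_fst)
    have h1 : Measurable fun q : ((X0 × (U0 × Xi) × ProbabilityMeasure X) × X0) × (U0 × Xi) => q.1.2 :=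
      measurable_snd.comp measurable_fst
    have h2 : Measurable fun q : ((X0 × (U0 × Xi) × ProbabilityMeasure X) × X0) × (U0 × Xi) => q.2 :=
      measurable_snd
    exact h1.prodMk (h2.prodMk hT)

lemma meas_limKer (H : Hyp M p p0 Γ pt TG) : Measurable (limKer p0 pt TG) := by
  refine measurable_bind_param (κ := fun s : X0 × (U0 × Xi) × ProbabilityMeasure X =>
    (p0 s.1 s.2.1.1 s.2.2 : Measure X0)) ?_
    (η := fun r : (X0 × (U0 × Xi) × ProbabilityMeasure X) × X0 =>
      ((pt r.2 (TG r.1.1 r.1.2.1.1 r.1.2.1.2 r.1.2.2) : Measure (U0 × Xi))).map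
          fun a => (r.2, a, TG r.1.1 r.1.2.1.1 r.1.2.1.2 r.1.2.2)) H.meas_limInner
  exact H.meas_p0.comp (g := fun q : (X0 × U0) × ProbabilityMeasure X => (p0 q.1.1 q.1.2 q.2 : Measure X0))
    (f := fun s : X0 × (U0 × Xi) × ProbabilityMeasure X => ((s.1, s.2.1.1), s.2.2)) (by fun_prop)

lemma meas_act (H : Hyp M p p0 Γ pt TG) (N : ℕ) : Measurable fun y : X0 × (Fin N → X) =>
    ((pt y.1 (emp N y.2) : Measure (U0 × Xi))).map fun a => (y.1, a, y.2) := by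
  refine measurable_map_param (κ := fun y : X0 × (Fin N → X) =>
    ((pt y.1 (emp N y.2) : Measure (U0 × Xi)))) ?_ (g := fun q => (q.1.1, q.2, q.1.2)) (by fun_prop)
  exact H.meas_pt.comp (g := fun q : X0 × ProbabilityMeasure X => (pt q.1 q.2 : Measure (U0 × Xi)))
    (measurable_fst.prodMk ((measurable_emp N).comp measurable_snd))

lemma prob_act (H : Hyp M p p0 Γ pt TG) (N : ℕ) (y : X0 × (Fin N → X)) : IsProbabilityMeasure
    (((pt y.1 (emp N y.2) : Measure (U0 × Xi))).map fun a => (y.1, a, y.2)) :=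
  Measure.isProbabilityMeasure_map (by fun_prop)

lemma meas_nKer (H : Hyp M p p0 Γ pt TG) (N : ℕ) : Measurable (nKer p p0 Γ pt N) := by
  haveI := H.prob_nu
  have hpi : Measurable fun s : X0 × (U0 × Xi) × (Fin N → X) =>
      Measure.pi fun i => nuM p Γ (s.2.2 i) s.1 s.2.1.1 s.2.1.2 (emp N s.2.2) := by
    refine measurable_pi_param (ν := fun (s : X0 × (U0 × Xi) × (Fin N → X)) (i : Fin N) =>
      nuM p Γ (s.2.2 i) s.1 s.2.1.1 s.2.1.2 (emp N s.2.2)) fun i => ?_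
    refine H.meas_nu.comp (g := fun q : X × (X0 × (U0 × Xi) × ProbabilityMeasure X) =>
        nuM p Γ q.1 q.2.1 q.2.2.1.1 q.2.2.1.2 q.2.2.2)
        (f := fun s : X0 × (U0 × Xi) × (Fin N → X) => (s.2.2 i, eN s)) ?_
    exact Measurable.prodMk (by fun_prop) measurable_eN
  have hp0' : Measurable fun s : X0 × (U0 × Xi) × (Fin N → X) =>
      (p0 s.1 s.2.1.1 (emp N s.2.2) : Measure X0) := by
    refine H.meas_p0.comp (g := fun q : (X0 × U0) × ProbabilityMeasure X => (p0 q.1.1 q.1.2 q.2 : Measure X0))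
      (f := fun s : X0 × (U0 × Xi) × (Fin N → X) => ((s.1, s.2.1.1), emp N s.2.2)) ?_
    exact Measurable.prodMk (by fun_prop) ((measurable_emp N).comp (by fun_prop))
  have hprod : Measurable fun s : X0 × (U0 × Xi) × (Fin N → X) =>
      ((p0 s.1 s.2.1.1 (emp N s.2.2) : Measure X0)).prod
        (Measure.pi fun i => nuM p Γ (s.2.2 i) s.1 s.2.1.1 s.2.1.2 (emp N s.2.2)) := by
    refine Measurable.measure_of_isPiSystem_of_isProbabilityMeasure generateFrom_prod.symm
      isPiSystem_prod ?_
    rintro _ ⟨u, hu, v, hv, rfl⟩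
    simp_rw [Measure.prod_prod]
    have hu' : MeasurableSet u := hu
    have hv' : MeasurableSet v := hv
    exact ((Measure.measurable_coe hu').comp hp0').mul ((Measure.measurable_coe hv').comp hpi)
  exact measurable_bind_param hprod
    (η := fun q : (X0 × (U0 × Xi) × (Fin N → X)) × (X0 × (Fin N → X)) =>
      ((pt q.2.1 (emp N q.2.2) : Measure (U0 × Xi))).map fun a => (q.2.1, a, q.2.2))
    ((H.meas_act N).comp (g := fun y : X0 × (Fin N → X) =>
    ((pt y.1 (emp N y.2) : Measure (U0 × Xi))).map fun a => (y.1, a, y.2)) (f := Prod.snd) measurable_snd)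

lemma prob_nKer (H : Hyp M p p0 Γ pt TG) (N : ℕ) (s) : IsProbabilityMeasure (nKer p p0 Γ pt N s) := by
  haveI := H.prob_nu
  haveI := H.prob_act N
  exact isProb_bind (H.meas_act N)

lemma prob_limKer (H : Hyp M p p0 Γ pt TG) (s) : IsProbabilityMeasure (limKer p0 pt TG s) := by
  have h : Measurable fun y0 => ((pt y0 (TG s.1 s.2.1.1 s.2.1.2 s.2.2) : Measure (U0 × Xi))).map
          fun a => (y0, a, TG s.1 s.2.1.1 s.2.1.2 s.2.2) :=
    H.meas_limInner.comp (g := fun r : (X0 × (U0 × Xi) × ProbabilityMeasure X) × X0 =>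
      ((pt r.2 (TG r.1.1 r.1.2.1.1 r.1.2.1.2 r.1.2.2) : Measure (U0 × Xi))).map
          fun a => (r.2, a, TG r.1.1 r.1.2.1.1 r.1.2.1.2 r.1.2.2))
      (f := fun y0 => (s, y0)) measurable_prodMk_left
  haveI : ∀ y0, IsProbabilityMeasure (((pt y0 (TG s.1 s.2.1.1 s.2.1.2 s.2.2) : Measure (U0 × Xi))).map
          fun a => (y0, a, TG s.1 s.2.1.1 s.2.1.2 s.2.2)) := fun y0 =>
    Measure.isProbabilityMeasure_map (by fun_prop)
  exact isProb_bind h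

end Hyp
end SYS

section SYS5
variable {X U X0 U0 Xi : Type*}
    [MetricSpace X] [CompactSpace X] [MeasurableSpace X] [BorelSpace X] [Nonempty X]
    [MetricSpace U] [CompactSpace U] [MeasurableSpace U] [BorelSpace U]
    [MetricSpace X0] [CompactSpace X0] [MeasurableSpace X0] [BorelSpace X0]
    [MetricSpace U0] [CompactSpace U0] [MeasurableSpace U0] [BorelSpace U0]
    [MetricSpace Xi] [CompactSpace Xi] [MeasurableSpace Xi] [BorelSpace Xi]

noncomputable def PA (pt : X0 → ProbabilityMeasure X → ProbabilityMeasure (U0 × Xi))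
    (f : X0 × (U0 × Xi) × ProbabilityMeasure X → ℝ) (y0 : X0) (μ : ProbabilityMeasure X) : ℝ :=
  ∫ a, f (y0, a, μ) ∂(pt y0 μ : Measure (U0 × Xi))

lemma meas_slice {L : ℝ} {f : X0 × (U0 × Xi) × ProbabilityMeasure X → ℝ} (hf : LipS L f)
    (y0 : X0) (μ : ProbabilityMeasure X) : Measurable fun a => f (y0, a, μ) :=
  hf.measurable.comp (f := fun a : U0 × Xi => (y0, a, μ)) (by fun_prop)

namespace Hyp
variable {M : ℝ}
    {p : X → U → X0 → U0 → ProbabilityMeasure X → ProbabilityMeasure X}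
    {p0 : X0 → U0 → ProbabilityMeasure X → ProbabilityMeasure X0}
    {Γ : Xi → X → ProbabilityMeasure U}
    {pt : X0 → ProbabilityMeasure X → ProbabilityMeasure (U0 × Xi)}
    {TG : X0 → U0 → Xi → ProbabilityMeasure X → ProbabilityMeasure X}

lemma PA_lip (H : Hyp M p p0 Γ pt TG) {L : ℝ} (hL : 0 ≤ L)
    {f : X0 × (U0 × Xi) × ProbabilityMeasure X → ℝ} (hf : LipS L f)
    (y0 y0' : X0) (μ μ' : ProbabilityMeasure X) :
    |PA pt f y0 μ - PA pt f y0' μ'| ≤ 2 * M * L * (dist y0 y0' + W1 μ μ') := by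
  obtain ⟨c, hc⟩ := hf.bdd
  have h1 : |∫ a, f (y0, a, μ) ∂(pt y0 μ : Measure (U0 × Xi)) -
      ∫ a, f (y0, a, μ) ∂(pt y0' μ' : Measure (U0 × Xi))| ≤ L * (M * (dist y0 y0' + W1 μ μ')) := by
    refine scale_lip (d := fun a b => dist a.1 b.1 + dist a.2 b.2) (H.hpt y0 y0' μ μ') hL
      fun a b => (hf _ _).trans (le_of_eq ?_)
    simp [dS, W1_self]
  have h2 : |∫ a, f (y0, a, μ) ∂(pt y0' μ' : Measure (U0 × Xi)) -
      ∫ a, f (y0', a, μ') ∂(pt y0' μ' : Measure (U0 × Xi))| ≤ L * (dist y0 y0' + W1 μ μ') := by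
    refine abs_integral_sub_le_const _ (integrable_bdd (meas_slice hf _ _) fun a => hc _)
      (integrable_bdd (meas_slice hf _ _) fun a => hc _) fun a => (hf _ _).trans (le_of_eq ?_)
    simp [dS]
  have h3 := abs_sub_le (PA pt f y0 μ) (∫ a, f (y0, a, μ) ∂(pt y0' μ' : Measure (U0 × Xi)))
    (PA pt f y0' μ')
  unfold PA at h3 ⊢
  have hd : 0 ≤ L * (dist y0 y0' + W1 μ μ') :=
    mul_nonneg hL (add_nonneg dist_nonneg (W1_nonneg _ _))
  nlinarith [H.one_le]

lemma PA_bdd {f : X0 × (U0 × Xi) × ProbabilityMeasure X → ℝ} {c : ℝ} (hc : ∀ s, |f s| ≤ c) (y0 : X0)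
    (μ : ProbabilityMeasure X) : |PA pt f y0 μ| ≤ c :=
  abs_integral_le_bdd fun a => hc _

lemma PA_meas (H : Hyp M p p0 Γ pt TG) {L : ℝ} (hL : 0 ≤ L)
    {f : X0 × (U0 × Xi) × ProbabilityMeasure X → ℝ} (hf : LipS L f) :
    Measurable fun q : X0 × ProbabilityMeasure X => PA pt f q.1 q.2 :=
  (stronglyMeasurable_of_lip (F := fun q : X0 × ProbabilityMeasure X => PA pt f q.1 q.2)
    (K := 2 * M * L) fun z z' μ ν => by rw [Real.norm_eq_abs]; exact H.PA_lip hL hf _ _ _ _).measurable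

lemma int_nu (H : Hyp M p p0 Γ pt TG) {f : X → ℝ} (hf : LipschitzWith 1 f) (x : X) (x0 : X0) (u0 : U0)
    (ξ : Xi) (μ : ProbabilityMeasure X) :
    ∫ y, f y ∂(nuM p Γ x x0 u0 ξ μ) = ∫ u, ∫ y, f y ∂(p x u x0 u0 μ : Measure X) ∂(Γ ξ x : Measure U) := by
  obtain ⟨C, hC⟩ := isCompact_univ.exists_bound_of_continuousOn hf.continuous.continuousOn
  exact integral_bind_bdd (H.meas_p_u x x0 u0 μ) hf.continuous.measurable fun y => hC y trivial

lemma nu_lip (H : Hyp M p p0 Γ pt TG) {f : X → ℝ} (hf : LipschitzWith 1 f) (x x' : X)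
    (s s' : X0 × (U0 × Xi) × ProbabilityMeasure X) :
    |∫ y, f y ∂(nuM p Γ x s.1 s.2.1.1 s.2.1.2 s.2.2) - ∫ y, f y ∂(nuM p Γ x' s'.1 s'.2.1.1 s'.2.1.2 s'.2.2)|
      ≤ 2 * M ^ 2 * (dist x x' + dS s s') := by
  have hM := H.one_le
  rw [H.int_nu hf, H.int_nu hf]
  have hG : ∀ u u' : U, ∀ x, ∀ s : X0 × (U0 × Xi) × ProbabilityMeasure X,
      |∫ y, f y ∂(p x u s.1 s.2.1.1 s.2.2 : Measure X) - ∫ y, f y ∂(p x u' s.1 s.2.1.1 s.2.2 : Measure X)|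
       ≤ M * dist u u' := fun u u' x s => by
    refine (H.hp _ _ _ _ _ _ _ _ _ _ f hf).trans (le_of_eq ?_)
    simp [W1_self]
  have h1 := scale_lip' (H.hΓ s.2.1.2 s'.2.1.2 x x') H.M0 (fun u u' => hG u u' x s)
  have h2 : |∫ u, ∫ y, f y ∂(p x u s.1 s.2.1.1 s.2.2 : Measure X) ∂(Γ s'.2.1.2 x' : Measure U) -
      ∫ u, ∫ y, f y ∂(p x' u s'.1 s'.2.1.1 s'.2.2 : Measure X) ∂(Γ s'.2.1.2 x' : Measure U)|
      ≤ M * (dist x x' + dist s.1 s'.1 + dist s.2.1.1 s'.2.1.1 + W1 s.2.2 s'.2.2) := by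
    refine abs_integral_sub_le_const _ (lip_integrable (lipschitz_of_abs H.M0 fun u u' => hG u u' x s) _)
      (lip_integrable (lipschitz_of_abs H.M0 fun u u' => hG u u' x' s') _) fun u => ?_
    refine (H.hp _ _ _ _ _ _ _ _ _ _ f hf).trans (le_of_eq ?_)
    simp
  refine (abs_sub_le _ _ _).trans ((add_le_add h1 h2).trans ?_)
  have h3 : 0 ≤ dist x x' := dist_nonneg
  have h4 : 0 ≤ dist s.1 s'.1 := dist_nonneg
  have h5 : 0 ≤ dist s.2.1.1 s'.2.1.1 := dist_nonneg
  have h6 : 0 ≤ dist s.2.1.2 s'.2.1.2 := dist_nonneg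
  have h7 := W1_nonneg s.2.2 s'.2.2
  have hMM : M ≤ M ^ 2 := by nlinarith
  have e1 : M * (dist x x' + dist s.1 s'.1 + dist s.2.1.1 s'.2.1.1 + W1 s.2.2 s'.2.2) ≤
      M ^ 2 * (dist x x' + dS s s') :=
    mul_le_mul hMM (by unfold dS; linarith) (by positivity) (by positivity)
  have e2 : M * (M * (dist s.2.1.2 s'.2.1.2 + dist x x')) ≤ M ^ 2 * (dist x x' + dS s s') := by
    rw [← mul_assoc, ← pow_two]
    exact mul_le_mul_of_nonneg_left (by unfold dS; linarith) (by positivity)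
  linarith

lemma TG_lip (H : Hyp M p p0 Γ pt TG) (s s' : X0 × (U0 × Xi) × ProbabilityMeasure X) :
    W1 (TG s.1 s.2.1.1 s.2.1.2 s.2.2) (TG s'.1 s'.2.1.1 s'.2.1.2 s'.2.2) ≤ 4 * M ^ 2 * dS s s' := by
  have hM := H.one_le
  refine W1_le fun f hf => ?_
  obtain ⟨C, hC⟩ := isCompact_univ.exists_bound_of_continuousOn hf.continuous.continuousOn
  haveI := H.prob_nu
  have hint : ∀ s : X0 × (U0 × Xi) × ProbabilityMeasure X,
      ∫ y, f y ∂(TG s.1 s.2.1.1 s.2.1.2 s.2.2 : Measure X) =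
        ∫ x, ∫ y, f y ∂(nuM p Γ x s.1 s.2.1.1 s.2.1.2 s.2.2) ∂(s.2.2 : Measure X) := fun s => by
    rw [H.hTG]
    exact integral_bind_bdd (H.meas_nu_x s.1 s.2.1.1 s.2.1.2 s.2.2) hf.continuous.measurable
      fun y => hC y trivial
  rw [hint, hint]
  have hM2 : (0:ℝ) ≤ 2 * M ^ 2 := by positivity
  have hl : ∀ s : X0 × (U0 × Xi) × ProbabilityMeasure X, ∀ x x' : X,
      |∫ y, f y ∂(nuM p Γ x s.1 s.2.1.1 s.2.1.2 s.2.2) - ∫ y, f y ∂(nuM p Γ x' s.1 s.2.1.1 s.2.1.2 s.2.2)|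
      ≤ 2 * M ^ 2 * dist x x' := fun s x x' => by
    refine (H.nu_lip hf x x' s s).trans (le_of_eq ?_)
    simp [dS, W1_self]
  have h1 := scale_lip' (fun f hf => le_W1 s.2.2 s'.2.2 hf) hM2 (hl s)
  have h2 := abs_integral_sub_le_const (s'.2.2 : Measure X)
    (lip_integrable (lipschitz_of_abs hM2 (hl s)) _) (lip_integrable (lipschitz_of_abs hM2 (hl s')) _)
    (c := 2 * M ^ 2 * dS s s') (fun x => by
      refine (H.nu_lip hf x x s s').trans (le_of_eq ?_)
      simp)
  refine (abs_sub_le _ _ _).trans ((add_le_add h1 h2).trans ?_)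
  have : W1 s.2.2 s'.2.2 ≤ dS s s' := by
    unfold dS
    have h4 : 0 ≤ dist s.1 s'.1 := dist_nonneg
    have h5 : 0 ≤ dist s.2.1.1 s'.2.1.1 := dist_nonneg
    have h6 : 0 ≤ dist s.2.1.2 s'.2.1.2 := dist_nonneg
    linarith
  nlinarith

lemma int_limKer (H : Hyp M p p0 Γ pt TG) {L : ℝ}
    {f : X0 × (U0 × Xi) × ProbabilityMeasure X → ℝ} (hf : LipS L f)
    (s : X0 × (U0 × Xi) × ProbabilityMeasure X) :
    ∫ z, f z ∂(limKer p0 pt TG s) =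
      ∫ y0, PA pt f y0 (TG s.1 s.2.1.1 s.2.1.2 s.2.2) ∂(p0 s.1 s.2.1.1 s.2.2 : Measure X0) := by
  obtain ⟨c, hc⟩ := hf.bdd
  have h : Measurable fun y0 => ((pt y0 (TG s.1 s.2.1.1 s.2.1.2 s.2.2) : Measure (U0 × Xi))).map
          fun a => (y0, a, TG s.1 s.2.1.1 s.2.1.2 s.2.2) :=
    H.meas_limInner.comp (g := fun r : (X0 × (U0 × Xi) × ProbabilityMeasure X) × X0 =>
      ((pt r.2 (TG r.1.1 r.1.2.1.1 r.1.2.1.2 r.1.2.2) : Measure (U0 × Xi))).map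
          fun a => (r.2, a, TG r.1.1 r.1.2.1.1 r.1.2.1.2 r.1.2.2))
      (f := fun y0 => (s, y0)) measurable_prodMk_left
  haveI : ∀ y0, IsProbabilityMeasure (((pt y0 (TG s.1 s.2.1.1 s.2.1.2 s.2.2) : Measure (U0 × Xi))).map
          fun a => (y0, a, TG s.1 s.2.1.1 s.2.1.2 s.2.2)) := fun y0 =>
    Measure.isProbabilityMeasure_map (by fun_prop)
  unfold limKer
  rw [integral_bind_bdd h hf.measurable hc]
  congr 1
  ext y0
  rw [integral_map (by fun_prop) hf.measurable.aestronglyMeasurable]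
  rfl

lemma limKer_lip (H : Hyp M p p0 Γ pt TG) {L : ℝ} (hL : 0 ≤ L)
    {f : X0 × (U0 × Xi) × ProbabilityMeasure X → ℝ} (hf : LipS L f) :
    LipS (10 * M ^ 3 * L) fun s => ∫ z, f z ∂(limKer p0 pt TG s) := by
  intro s s'
  have hM := H.one_le
  simp only [H.int_limKer hf]
  have h0 : 0 ≤ 2 * M * L := by positivity
  have hl : ∀ μ : ProbabilityMeasure X, ∀ y y' : X0, |PA pt f y μ - PA pt f y' μ| ≤ 2 * M * L * dist y y' :=
    fun μ y y' => (H.PA_lip hL hf _ _ _ _).trans (le_of_eq (by simp [W1_self]))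
  have h1 := scale_lip' (H.hp0 s.1 s'.1 s.2.1.1 s'.2.1.1 s.2.2 s'.2.2) h0
    (hl (TG s.1 s.2.1.1 s.2.1.2 s.2.2))
  have h2 := abs_integral_sub_le_const (p0 s'.1 s'.2.1.1 s'.2.2 : Measure X0)
    (lip_integrable (lipschitz_of_abs h0 (hl (TG s.1 s.2.1.1 s.2.1.2 s.2.2))) _)
    (lip_integrable (lipschitz_of_abs h0 (hl (TG s'.1 s'.2.1.1 s'.2.1.2 s'.2.2))) _)
    (c := 2 * M * L * (4 * M ^ 2 * dS s s')) (fun x => by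
      refine (H.PA_lip hL hf _ _ _ _).trans (mul_le_mul_of_nonneg_left ?_ h0)
      rw [dist_self, zero_add]
      exact H.TG_lip s s')
  refine (abs_sub_le _ _ _).trans ((add_le_add h1 h2).trans ?_)
  have h4 : M * (dist s.1 s'.1 + dist s.2.1.1 s'.2.1.1 + W1 s.2.2 s'.2.2) ≤ M ^ 2 * dS s s' := by
    have h4 : 0 ≤ dist s.1 s'.1 := dist_nonneg
    have h5 : 0 ≤ dist s.2.1.1 s'.2.1.1 := dist_nonneg
    have h6 : 0 ≤ dist s.2.1.2 s'.2.1.2 := dist_nonneg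
    have h7 := W1_nonneg s.2.2 s'.2.2
    exact mul_le_mul (by nlinarith) (by unfold dS; linarith) (by positivity) (by positivity)
  have h5 := mul_le_mul_of_nonneg_left h4 h0
  calc _ ≤ 2 * M * L * (M ^ 2 * dS s s') + 2 * M * L * (4 * M ^ 2 * dS s s') := by linarith
    _ = _ := by ring

lemma TG_emp (H : Hyp M p p0 Γ pt TG) {N : ℕ} (hN : N ≠ 0) (x : Fin N → X) (x0 : X0) (u0 : U0) (ξ : Xi) :
    (TG x0 u0 ξ (emp N x) : Measure X) =
      (N : ENNReal)⁻¹ • ∑ i, nuM p Γ (x i) x0 u0 ξ (emp N x) := by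
  have hm := H.meas_nu_x x0 u0 ξ (emp N x)
  rw [H.hTG]
  change (emp N x : Measure X).bind (fun y => nuM p Γ y x0 u0 ξ (emp N x)) = _
  ext A hA
  rw [Measure.bind_apply hA hm.aemeasurable]
  conv_lhs => rw [emp_coe hN]
  rw [lintegral_smul_measure, lintegral_finset_sum_measure]
  have hm' : Measurable fun y => nuM p Γ y x0 u0 ξ (emp N x) A := (Measure.measurable_coe hA).comp hm
  simp only [lintegral_dirac' _ hm', Measure.smul_apply, Measure.coe_finset_sum, Finset.sum_apply,
    smul_eq_mul]

lemma int_act (H : Hyp M p p0 Γ pt TG) {L : ℝ} {N : ℕ}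
    {f : X0 × (U0 × Xi) × ProbabilityMeasure X → ℝ} (hf : LipS L f) (y : X0 × (Fin N → X)) :
    ∫ z, f (eN z) ∂((pt y.1 (emp N y.2) : Measure (U0 × Xi)).map fun a => (y.1, a, y.2)) =
      PA pt f y.1 (emp N y.2) := by
  have hm : Measurable fun z : X0 × (U0 × Xi) × (Fin N → X) => f (eN z) := hf.measurable.comp measurable_eN
  rw [integral_map (f := fun z : X0 × (U0 × Xi) × (Fin N → X) => f (eN z)) (by fun_prop) hm.aestronglyMeasurable]
  rfl

lemma step (H : Hyp M p p0 Γ pt TG) {L : ℝ} (hL : 0 ≤ L)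
    {f : X0 × (U0 × Xi) × ProbabilityMeasure X → ℝ} (hf : LipS L f) {N : ℕ} (hN : N ≠ 0) {ε : ℝ}
    (hlln : LLN X N ε) (s : X0 × (U0 × Xi) × (Fin N → X)) :
    |∫ z, f (eN z) ∂(nKer p p0 Γ pt N s) - ∫ z, f z ∂(limKer p0 pt TG (eN s))| ≤ 2 * M * L * ε := by
  have hM := H.one_le
  obtain ⟨c, hc⟩ := hf.bdd
  haveI := H.prob_nu
  haveI := H.prob_act N
  set ρ := TG s.1 s.2.1.1 s.2.1.2 (emp N s.2.2) with hρ
  set m1 := (p0 s.1 s.2.1.1 (emp N s.2.2) : Measure X0) with hm1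
  set m2 := (Measure.pi fun i => nuM p Γ (s.2.2 i) s.1 s.2.1.1 s.2.1.2 (emp N s.2.2)) with hm2
  haveI : IsProbabilityMeasure m1 := by rw [hm1]; infer_instance
  haveI : IsProbabilityMeasure m2 := by rw [hm2]; infer_instance
  have e1 : ∫ z, f (eN z) ∂(nKer p p0 Γ pt N s) = ∫ y, PA pt f y.1 (emp N y.2) ∂(m1.prod m2) := by
    unfold nKer
    rw [integral_bind_bdd (H.meas_act N) (f := fun z => f (eN z)) (hf.measurable.comp measurable_eN)
      (fun x => hc _)]
    simp only [H.int_act hf]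
    rfl
  have e2 : ∫ z, f z ∂(limKer p0 pt TG (eN s)) = ∫ y, PA pt f y.1 ρ ∂(m1.prod m2) := by
    rw [H.int_limKer hf]
    change ∫ y0, PA pt f y0 ρ ∂m1 = _
    rw [integral_fun_fst (fun y0 => PA pt f y0 ρ)]
    simp
  have hW : ∫ y, W1 (emp N y) ρ ∂m2 ≤ ε := by
    refine hlln _ (fun i => H.prob_nu _ _ _ _ _) ρ ?_
    exact H.TG_emp hN s.2.2 s.1 s.2.1.1 s.2.1.2
  have e3 : ∫ y, W1 (emp N y.2) ρ ∂(m1.prod m2) = ∫ y, W1 (emp N y) ρ ∂m2 := by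
    rw [integral_fun_snd (fun y => W1 (emp N y) ρ)]
    simp
  have i1 : Integrable (fun y : X0 × (Fin N → X) => PA pt f y.1 (emp N y.2)) (m1.prod m2) := by
    refine integrable_bdd ?_ (fun y => PA_bdd hc _ _)
    exact (H.PA_meas hL hf).comp (g := fun q : X0 × ProbabilityMeasure X => PA pt f q.1 q.2)
      (f := fun y : X0 × (Fin N → X) => (y.1, emp N y.2))
      (measurable_fst.prodMk ((measurable_emp N).comp measurable_snd))
  have i2 : Integrable (fun y : X0 × (Fin N → X) => PA pt f y.1 ρ) (m1.prod m2) := by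
    refine integrable_bdd ?_ (fun y => PA_bdd hc _ _)
    exact (H.PA_meas hL hf).comp (g := fun q : X0 × ProbabilityMeasure X => PA pt f q.1 q.2)
      (f := fun y : X0 × (Fin N → X) => (y.1, ρ)) (measurable_fst.prodMk measurable_const)
  have i3 : Integrable (fun y : X0 × (Fin N → X) => W1 (emp N y.2) ρ) (m1.prod m2) := by
    refine integrable_bdd ?_ (fun y => abs_W1_le _ _)
    exact (measurable_W1_emp ρ).comp measurable_snd
  rw [e1, e2, ← integral_sub i1 i2]
  refine (abs_integral_le_integral_abs).trans ?_
  refine (integral_mono (i1.sub i2).abs (i3.const_mul (2 * M * L)) fun y => ?_).trans ?_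
  · refine (H.PA_lip hL hf _ _ _ _).trans (le_of_eq ?_)
    simp
  · rw [integral_const_mul, e3]
    exact mul_le_mul_of_nonneg_left hW (by positivity)

end Hyp
end SYS5

section SYS6
variable {X U X0 U0 Xi Θ : Type*}
    [MetricSpace X] [CompactSpace X] [MeasurableSpace X] [BorelSpace X] [Nonempty X]
    [MetricSpace U] [CompactSpace U] [MeasurableSpace U] [BorelSpace U]
    [MetricSpace X0] [CompactSpace X0] [MeasurableSpace X0] [BorelSpace X0]
    [MetricSpace U0] [CompactSpace U0] [MeasurableSpace U0] [BorelSpace U0]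
    [MetricSpace Xi] [CompactSpace Xi] [MeasurableSpace Xi] [BorelSpace Xi]

def Close {N : ℕ} (ι : Measure (X0 × (U0 × Xi) × (Fin N → X)))
    (ι' : Measure (X0 × (U0 × Xi) × ProbabilityMeasure X)) (η : ℝ) : Prop :=
  ∀ L : ℝ, 0 ≤ L → ∀ f : X0 × (U0 × Xi) × ProbabilityMeasure X → ℝ, LipS L f →
    |∫ s, f (eN s) ∂ι - ∫ s, f s ∂ι'| ≤ L * η

def LClose (ι ι' : Measure (X0 × (U0 × Xi) × ProbabilityMeasure X)) (η : ℝ) : Prop :=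
  ∀ L : ℝ, 0 ≤ L → ∀ f : X0 × (U0 × Xi) × ProbabilityMeasure X → ℝ, LipS L f →
    |∫ s, f s ∂ι - ∫ s, f s ∂ι'| ≤ L * η

def Bc (C : ℝ) : ℕ → ℝ
  | 0 => 1
  | t + 1 => C * (1 + Bc C t)

lemma Bc_nonneg {C : ℝ} (hC : 0 ≤ C) (t : ℕ) : 0 ≤ Bc C t := by
  induction t with
  | zero => simp [Bc]
  | succ t ih => exact mul_nonneg hC (by linarith)

lemma int_emp_lip {N : ℕ} (hN : N ≠ 0) {ε : ℝ} (hlln : LLN X N ε) (μ : ProbabilityMeasure X)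
    {F : ProbabilityMeasure X → ℝ} {K : ℝ} (hK : 0 ≤ K) (hF : ∀ ν ν', |F ν - F ν'| ≤ K * W1 ν ν') :
    |∫ x, F (emp N x) ∂(Measure.pi fun _ : Fin N => (μ : Measure X)) - F μ| ≤ K * ε := by
  have hm : Measurable F := (stronglyMeasurable_of_W1 (K := K) fun ν ν' => by
    rw [Real.norm_eq_abs]; exact hF ν ν').measurable
  have hb : ∀ ν, |F ν| ≤ |F μ| + K * (2 * Metric.diam (Set.univ : Set X)) := fun ν => by
    have h1 := hF ν μ
    have h2 := mul_le_mul_of_nonneg_left (W1_le_diam ν μ) hK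
    have h3 : |F ν| ≤ |F ν - F μ| + |F μ| := by
      have := abs_add_le (F ν - F μ) (F μ); simpa using this
    linarith
  have i1 : Integrable (fun x : Fin N → X => F (emp N x)) (Measure.pi fun _ : Fin N => (μ : Measure X)) :=
    integrable_bdd (hm.comp (measurable_emp N)) fun x => hb _
  have i3 : Integrable (fun x : Fin N → X => W1 (emp N x) μ) (Measure.pi fun _ : Fin N => (μ : Measure X)) :=
    integrable_bdd (measurable_W1_emp μ) fun x => abs_W1_le _ _
  have e : F μ = ∫ x, F μ ∂(Measure.pi fun _ : Fin N => (μ : Measure X)) := by simp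
  conv_lhs => rw [e]
  rw [← integral_sub i1 (integrable_const _)]
  refine (abs_integral_le_integral_abs).trans ?_
  refine (integral_mono (i1.sub (integrable_const _)).abs (i3.const_mul K) fun y => hF _ _).trans ?_
  rw [integral_const_mul]
  refine mul_le_mul_of_nonneg_left ?_ hK
  refine hlln _ (fun i => inferInstance) μ ?_
  simp only [Finset.sum_const, Finset.card_univ, Fintype.card_fin]
  rw [← Nat.cast_smul_eq_nsmul ENNReal, smul_smul, ENNReal.inv_mul_cancel (by exact_mod_cast hN) (by simp),
    one_smul]

namespace Hyp
variable {M : ℝ}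
    {p : X → U → X0 → U0 → ProbabilityMeasure X → ProbabilityMeasure X}
    {p0 : X0 → U0 → ProbabilityMeasure X → ProbabilityMeasure X0}
    {Γ : Xi → X → ProbabilityMeasure U}
    {pit : Θ → X0 → ProbabilityMeasure X → ProbabilityMeasure (U0 × Xi)} {θ : Θ}
    {TG : X0 → U0 → Xi → ProbabilityMeasure X → ProbabilityMeasure X}

lemma pLawN_succ {N : ℕ} (ι : Measure (X0 × (U0 × Xi) × (Fin N → X))) (t : ℕ) :
    pLawNFrom p p0 Γ pit θ N ι (t + 1) =
      (pLawNFrom p p0 Γ pit θ N ι t).bind (nKer p p0 Γ (pit θ) N) := rfl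

lemma pLim_succ (ι : Measure (X0 × (U0 × Xi) × ProbabilityMeasure X)) (t : ℕ) :
    pLimLawFrom p0 pit TG θ ι (t + 1) =
      (pLimLawFrom p0 pit TG θ ι t).bind (limKer p0 (pit θ) TG) := rfl

lemma prob_pLawN (H : Hyp M p p0 Γ (pit θ) TG) {N : ℕ} (ι : Measure (X0 × (U0 × Xi) × (Fin N → X)))
    [IsProbabilityMeasure ι] (t : ℕ) : IsProbabilityMeasure (pLawNFrom p p0 Γ pit θ N ι t) := by
  induction t with
  | zero => assumption
  | succ t ih =>
    haveI := H.prob_nKer N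
    rw [pLawN_succ]
    exact isProb_bind (H.meas_nKer N)

lemma prob_pLim (H : Hyp M p p0 Γ (pit θ) TG) (ι : Measure (X0 × (U0 × Xi) × ProbabilityMeasure X))
    [IsProbabilityMeasure ι] (t : ℕ) : IsProbabilityMeasure (pLimLawFrom p0 pit TG θ ι t) := by
  induction t with
  | zero => assumption
  | succ t ih =>
    haveI := H.prob_limKer
    rw [pLim_succ]
    exact isProb_bind H.meas_limKer

lemma close_all (H : Hyp M p p0 Γ (pit θ) TG) {N : ℕ} (hN : N ≠ 0) {ε : ℝ} (hε : 0 ≤ ε)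
    (hlln : LLN X N ε)
    (ι : Measure (X0 × (U0 × Xi) × (Fin N → X))) [IsProbabilityMeasure ι]
    (ι' : Measure (X0 × (U0 × Xi) × ProbabilityMeasure X)) [IsProbabilityMeasure ι'] {η : ℝ} (hη : 0 ≤ η)
    (h : Close ι ι' η) (t : ℕ) :
    Close (pLawNFrom p p0 Γ pit θ N ι t) (pLimLawFrom p0 pit TG θ ι' t)
      (Bc (10 * M ^ 3) t * (ε + η)) := by
  have hM := H.one_le
  induction t with
  | zero =>
    intro L hL f hf
    refine (h L hL f hf).trans (mul_le_mul_of_nonneg_left ?_ hL)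
    simp only [Bc]; linarith
  | succ t ih =>
    intro L hL f hf
    obtain ⟨c, hc⟩ := hf.bdd
    haveI := H.prob_nKer N
    haveI := H.prob_limKer
    haveI := H.prob_pLawN ι t
    haveI := H.prob_pLim ι' t
    have hm : Measurable fun z : X0 × (U0 × Xi) × (Fin N → X) => f (eN z) :=
      hf.measurable.comp measurable_eN
    rw [pLawN_succ, pLim_succ, integral_bind_bdd (H.meas_nKer N) hm (fun x => hc _),
      integral_bind_bdd H.meas_limKer hf.measurable hc]
    have hg := H.limKer_lip hL hf
    have h2 := ih _ (by positivity) _ hg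
    have h1 := abs_integral_sub_le_const (pLawNFrom p p0 Γ pit θ N ι t)
      (f := fun s => ∫ z, f (eN z) ∂(nKer p p0 Γ (pit θ) N s))
      (g := fun s => ∫ z, f z ∂(limKer p0 (pit θ) TG (eN s)))
      (integrable_bdd (measurable_integral_measure (H.meas_nKer N) hm)
        fun s => abs_integral_le_bdd fun x => hc _)
      (integrable_bdd (hg.measurable.comp measurable_eN)
        fun s => abs_integral_le_bdd fun x => hc _)
      (fun s => H.step hL hf hN hlln s)
    refine (abs_sub_le _ _ _).trans ((add_le_add h1 h2).trans ?_)
    have hB := Bc_nonneg (C := 10 * M ^ 3) (by positivity) t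
    have e1 : 2 * M * L * ε ≤ 10 * M ^ 3 * L * (ε + η) := by
      have : 2 * M ≤ 10 * M ^ 3 := by nlinarith [sq_nonneg (M - 1), mul_nonneg H.M0 (sq_nonneg (M-1))]
      have hLε : L * ε ≤ L * (ε + η) := mul_le_mul_of_nonneg_left (by linarith) hL
      calc 2 * M * L * ε = 2 * M * (L * ε) := by ring
        _ ≤ 10 * M ^ 3 * (L * (ε + η)) := mul_le_mul this hLε (by positivity) (by positivity)
        _ = _ := by ring
    calc _ ≤ 10 * M ^ 3 * L * (ε + η) + 10 * M ^ 3 * L * (Bc (10 * M ^ 3) t * (ε + η)) := by linarith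
      _ = _ := by simp only [Bc]; ring

lemma lclose_all (H : Hyp M p p0 Γ (pit θ) TG)
    (ι ι' : Measure (X0 × (U0 × Xi) × ProbabilityMeasure X)) [IsProbabilityMeasure ι]
    [IsProbabilityMeasure ι'] {η : ℝ} (h : LClose ι ι' η) (t : ℕ) :
    LClose (pLimLawFrom p0 pit TG θ ι t) (pLimLawFrom p0 pit TG θ ι' t)
      ((10 * M ^ 3) ^ t * η) := by
  have hM := H.one_le
  induction t with
  | zero => rw [pow_zero, one_mul]; exact h
  | succ t ih =>
    intro L hL f hf
    obtain ⟨c, hc⟩ := hf.bdd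
    haveI := H.prob_limKer
    haveI := H.prob_pLim ι t
    haveI := H.prob_pLim ι' t
    rw [pLim_succ, pLim_succ, integral_bind_bdd H.meas_limKer hf.measurable hc,
      integral_bind_bdd H.meas_limKer hf.measurable hc]
    refine (ih _ (by positivity) _ (H.limKer_lip hL hf)).trans (le_of_eq ?_)
    ring

lemma lim_dirac_lip (H : Hyp M p p0 Γ (pit θ) TG) {L : ℝ} (hL : 0 ≤ L)
    {f : X0 × (U0 × Xi) × ProbabilityMeasure X → ℝ} (hf : LipS L f) (t : ℕ) :
    LipS (L * (10 * M ^ 3) ^ t) fun s => ∫ z, f z ∂(pLimLawFrom p0 pit TG θ (Measure.dirac s) t) := by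
  intro s s'
  have := H.lclose_all (Measure.dirac s) (Measure.dirac s') (η := dS s s') (fun L hL f hf => by
    rw [integral_dirac' _ _ hf.measurable.stronglyMeasurable,
      integral_dirac' _ _ hf.measurable.stronglyMeasurable]
    exact hf s s') t L hL f hf
  refine this.trans (le_of_eq ?_)
  ring

lemma init1 (H : Hyp M p p0 Γ (pit θ) TG) {N : ℕ} (hN : N ≠ 0) {ε : ℝ} (hlln : LLN X N ε)
    (μ : ProbabilityMeasure X) (x0 : X0) (u0 : U0) (ξ : Xi) :
    Close ((Measure.pi fun _ : Fin N => (μ : Measure X)).map fun x => (x0, (u0, ξ), x))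
      (Measure.dirac (x0, (u0, ξ), μ)) ε := by
  intro L hL f hf
  have hm : Measurable fun z : X0 × (U0 × Xi) × (Fin N → X) => f (eN z) :=
    hf.measurable.comp measurable_eN
  rw [integral_dirac' _ _ hf.measurable.stronglyMeasurable,
    integral_map (f := fun z : X0 × (U0 × Xi) × (Fin N → X) => f (eN z)) (by fun_prop)
      hm.aestronglyMeasurable]
  exact int_emp_lip hN hlln μ (F := fun ν => f (x0, (u0, ξ), ν)) hL
    fun ν ν' => (hf _ _).trans (le_of_eq (by simp [dS]))

lemma meas_init2 (H : Hyp M p p0 Γ (pit θ) TG) (N : ℕ) (x00 : X0) :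
    Measurable fun x : Fin N → X => ((pit θ x00 (emp N x) : Measure (U0 × Xi))).map fun a => (x00, a, x) :=
  (H.meas_act N).comp (g := fun y : X0 × (Fin N → X) =>
    ((pit θ y.1 (emp N y.2) : Measure (U0 × Xi))).map fun a => (y.1, a, y.2))
    (f := fun x => (x00, x)) measurable_prodMk_left

lemma prob_init2 (H : Hyp M p p0 Γ (pit θ) TG) (N : ℕ) (x00 : X0) (μ0 : ProbabilityMeasure X) :
    IsProbabilityMeasure ((Measure.pi fun _ : Fin N => (μ0 : Measure X)).bind fun x =>
                ((pit θ x00 (emp N x) : Measure (U0 × Xi))).map fun a => (x00, a, x)) := by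
  haveI : ∀ x : Fin N → X, IsProbabilityMeasure
      (((pit θ x00 (emp N x) : Measure (U0 × Xi))).map fun a => (x00, a, x)) :=
    fun x => H.prob_act N (x00, x)
  exact isProb_bind (H.meas_init2 N x00)

lemma init2 (H : Hyp M p p0 Γ (pit θ) TG) {N : ℕ} (hN : N ≠ 0) {ε : ℝ} (hlln : LLN X N ε)
    (μ0 : ProbabilityMeasure X) (x00 : X0) :
    Close ((Measure.pi fun _ : Fin N => (μ0 : Measure X)).bind fun x =>
                ((pit θ x00 (emp N x) : Measure (U0 × Xi))).map fun a => (x00, a, x))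
      (((pit θ x00 μ0 : Measure (U0 × Xi))).map fun a => (x00, a, μ0)) (2 * M * ε) := by
  intro L hL f hf
  have hM := H.one_le
  obtain ⟨c, hc⟩ := hf.bdd
  have hm : Measurable fun z : X0 × (U0 × Xi) × (Fin N → X) => f (eN z) :=
    hf.measurable.comp measurable_eN
  haveI : ∀ x : Fin N → X, IsProbabilityMeasure
      (((pit θ x00 (emp N x) : Measure (U0 × Xi))).map fun a => (x00, a, x)) :=
    fun x => H.prob_act N (x00, x)
  have e1 : ∀ x : Fin N → X, ∫ z, f (eN z) ∂(((pit θ x00 (emp N x) : Measure (U0 × Xi))).map fun a => (x00, a, x)) =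
      PA (pit θ) f x00 (emp N x) := fun x => H.int_act hf (x00, x)
  rw [integral_bind_bdd (H.meas_init2 N x00) hm (fun x => hc _),
    integral_map (by fun_prop) hf.measurable.aestronglyMeasurable]
  simp only [e1]
  have := int_emp_lip hN hlln μ0 (F := fun ν => PA (pit θ) f x00 ν) (K := 2 * M * L) (by positivity)
    fun ν ν' => (H.PA_lip hL hf _ _ _ _).trans (le_of_eq (by simp))
  refine this.trans (le_of_eq ?_)
  ring

end Hyp
end SYS6

lemma summable_geo {E : Type*} [NormedAddCommGroup E] [NormedSpace ℝ E] [CompleteSpace E] {γ : ℝ}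
    (h0 : 0 < γ) (h1 : γ < 1) {v : ℕ → E} {B : ℝ} (hv : ∀ t, ‖v t‖ ≤ B) :
    Summable (fun t => γ ^ t • v t) := by
  refine Summable.of_norm_bounded (g := fun t => γ ^ t * B)
    ((summable_geometric_of_lt_one h0.le h1).mul_right B) fun t => ?_
  rw [norm_smul, Real.norm_of_nonneg (pow_nonneg h0.le t)]
  exact mul_le_mul_of_nonneg_left (hv t) (pow_nonneg h0.le t)

lemma norm_tsum_geo_le {E : Type*} [NormedAddCommGroup E] [NormedSpace ℝ E] [CompleteSpace E] {γ : ℝ}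
    (h0 : 0 < γ) (h1 : γ < 1) {v : ℕ → E} {b : ℕ → ℝ} {B : ℝ} (hv : ∀ t, ‖v t‖ ≤ b t)
    (hb : ∀ t, b t ≤ B) :
    ‖∑' t, γ ^ t • v t‖ ≤ ∑' t, γ ^ t * b t := by
  have hb' : ∀ t, ‖b t‖ ≤ B := fun t => by
    rw [Real.norm_of_nonneg ((norm_nonneg _).trans (hv t))]; exact hb t
  refine tsum_of_norm_bounded (summable_geo h0 h1 hb').hasSum fun t => ?_
  rw [norm_smul, Real.norm_of_nonneg (pow_nonneg h0.le t)]
  exact mul_le_mul_of_nonneg_left (hv t) (pow_nonneg h0.le t)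

lemma norm_tsum_geo_le_const {E : Type*} [NormedAddCommGroup E] [NormedSpace ℝ E] [CompleteSpace E] {γ : ℝ}
    (h0 : 0 < γ) (h1 : γ < 1) {v : ℕ → E} {B : ℝ} (hv : ∀ t, ‖v t‖ ≤ B) :
    ‖∑' t, γ ^ t • v t‖ ≤ B * (1 - γ)⁻¹ := by
  refine (norm_tsum_geo_le h0 h1 hv fun t => le_rfl).trans (le_of_eq ?_)
  rw [tsum_mul_right, tsum_geometric_of_lt_one h0.le h1, mul_comm]

lemma tsum_unif {I : Type*} {γ : ℝ} (h0 : 0 < γ) (h1 : γ < 1) {a : ℕ → I → ℕ → ℝ} {B : ℝ}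
    (ha0 : ∀ N i t, 0 ≤ a N i t) (haB : ∀ N i t, a N i t ≤ B)
    (h : ∀ t, ∀ ε > (0:ℝ), ∃ N0 : ℕ, ∀ N ≥ N0, ∀ i, a N i t ≤ ε) :
    ∀ ε > (0:ℝ), ∃ N0 : ℕ, ∀ N ≥ N0, ∀ i, ∑' t, γ ^ t * a N i t ≤ ε := by
  intro ε hε
  have hg : 0 < 1 - γ := by linarith
  have hT : ∃ T : ℕ, γ ^ T * (B * (1 - γ)⁻¹) ≤ ε / 2 := by
    have : Tendsto (fun T : ℕ => γ ^ T * (B * (1 - γ)⁻¹)) atTop (𝓝 (0 * (B * (1 - γ)⁻¹))) :=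
      (tendsto_pow_atTop_nhds_zero_of_lt_one h0.le h1).mul_const _
    rw [zero_mul] at this
    obtain ⟨T, hT⟩ := (this.eventually (gt_mem_nhds (half_pos hε))).exists
    exact ⟨T, le_of_lt hT⟩
  obtain ⟨T, hT⟩ := hT
  have hδ : 0 < ε / 2 * (1 - γ) := by positivity
  choose N0 hN0 using fun t => h t _ hδ
  refine ⟨(Finset.range T).sup N0, fun N hN i => ?_⟩
  have hs : Summable fun t => γ ^ t * a N i t := summable_geo (E := ℝ) h0 h1 (B := B) fun t => by
    rw [Real.norm_of_nonneg (ha0 _ _ _)]; exact haB N i t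
  rw [← hs.sum_add_tsum_nat_add T]
  have e1 : ∑ t ∈ Finset.range T, γ ^ t * a N i t ≤ ε / 2 := by
    calc ∑ t ∈ Finset.range T, γ ^ t * a N i t ≤ ∑ t ∈ Finset.range T, γ ^ t * (ε / 2 * (1 - γ)) := by
          refine Finset.sum_le_sum fun t ht => mul_le_mul_of_nonneg_left ?_ (pow_nonneg h0.le t)
          exact hN0 t N ((Finset.le_sup ht).trans hN) i
      _ = (∑ t ∈ Finset.range T, γ ^ t) * (ε / 2 * (1 - γ)) := by rw [Finset.sum_mul]
      _ ≤ (1 - γ)⁻¹ * (ε / 2 * (1 - γ)) := by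
          refine mul_le_mul_of_nonneg_right ?_ hδ.le
          rw [← tsum_geometric_of_lt_one h0.le h1]
          exact (summable_geometric_of_lt_one h0.le h1).sum_le_tsum _ fun t _ => pow_nonneg h0.le t
      _ = ε / 2 := by field_simp
  have e2 : ∑' t, γ ^ (t + T) * a N i (t + T) ≤ ε / 2 := by
    have e3 : ∀ t, γ ^ (t + T) * a N i (t + T) = γ ^ T * (γ ^ t * a N i (t + T)) := fun t => by
      rw [pow_add]; ring
    simp only [e3]
    rw [tsum_mul_left]
    refine le_trans (mul_le_mul_of_nonneg_left ?_ (pow_nonneg h0.le T)) hT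
    have := norm_tsum_geo_le_const (E := ℝ) h0 h1 (v := fun t => a N i (t + T)) (B := B) fun t => by
      rw [Real.norm_of_nonneg (ha0 _ _ _)]; exact haB N i _
    exact (le_abs_self _).trans this
  linarith

section SYS7
variable {X U X0 U0 Xi Θ : Type*}
    [MetricSpace X] [CompactSpace X] [MeasurableSpace X] [BorelSpace X] [Nonempty X]
    [MetricSpace U] [CompactSpace U] [MeasurableSpace U] [BorelSpace U]
    [MetricSpace X0] [CompactSpace X0] [MeasurableSpace X0] [BorelSpace X0]
    [MetricSpace U0] [CompactSpace U0] [MeasurableSpace U0] [BorelSpace U0]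
    [MetricSpace Xi] [CompactSpace Xi] [MeasurableSpace Xi] [BorelSpace Xi]

/-- Initial law of the `N`-agent action-value function. -/
noncomputable def iota (N : ℕ) (s : X0 × (U0 × Xi) × ProbabilityMeasure X) :
    Measure (X0 × (U0 × Xi) × (Fin N → X)) :=
  (Measure.pi fun _ : Fin N => (s.2.2 : Measure X)).map fun x => (s.1, (s.2.1.1, s.2.1.2), x)

lemma meas_iota (N : ℕ) : Measurable
    (iota N : X0 × (U0 × Xi) × ProbabilityMeasure X → Measure (X0 × (U0 × Xi) × (Fin N → X))) := by
  refine measurable_map_param (κ := fun s : X0 × (U0 × Xi) × ProbabilityMeasure X =>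
    Measure.pi fun _ : Fin N => (s.2.2 : Measure X)) ?_
    (g := fun q : (X0 × (U0 × Xi) × ProbabilityMeasure X) × (Fin N → X) =>
      (q.1.1, (q.1.2.1.1, q.1.2.1.2), q.2)) (by fun_prop)
  exact measurable_pi_param (ν := fun (s : X0 × (U0 × Xi) × ProbabilityMeasure X) (_ : Fin N) =>
    (s.2.2 : Measure X)) fun i => measurable_coePM.comp (measurable_snd.comp measurable_snd)

instance prob_iota (N : ℕ) (s : X0 × (U0 × Xi) × ProbabilityMeasure X) :
    IsProbabilityMeasure (iota N s) := Measure.isProbabilityMeasure_map (by fun_prop)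

noncomputable def Qn (p : X → U → X0 → U0 → ProbabilityMeasure X → ProbabilityMeasure X)
    (p0 : X0 → U0 → ProbabilityMeasure X → ProbabilityMeasure X0)
    (Γ : Xi → X → ProbabilityMeasure U)
    (pit : Θ → X0 → ProbabilityMeasure X → ProbabilityMeasure (U0 × Xi))
    (γ : ℝ) (f : X0 × (U0 × Xi) × ProbabilityMeasure X → ℝ)
    (N : ℕ) (θ : Θ) (s : X0 × (U0 × Xi) × ProbabilityMeasure X) : ℝ :=
  ∑' t : ℕ, γ ^ t * ∫ z, f (eN z) ∂(pLawNFrom p p0 Γ pit θ N (iota N s) t)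

noncomputable def Ql (p0 : X0 → U0 → ProbabilityMeasure X → ProbabilityMeasure X0)
    (pit : Θ → X0 → ProbabilityMeasure X → ProbabilityMeasure (U0 × Xi))
    (TG : X0 → U0 → Xi → ProbabilityMeasure X → ProbabilityMeasure X)
    (γ : ℝ) (f : X0 × (U0 × Xi) × ProbabilityMeasure X → ℝ)
    (θ : Θ) (s : X0 × (U0 × Xi) × ProbabilityMeasure X) : ℝ :=
  ∑' t : ℕ, γ ^ t * ∫ z, f z ∂(pLimLawFrom p0 pit TG θ (Measure.dirac s) t)

noncomputable def QT (p0 : X0 → U0 → ProbabilityMeasure X → ProbabilityMeasure X0)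
    (pit : Θ → X0 → ProbabilityMeasure X → ProbabilityMeasure (U0 × Xi))
    (TG : X0 → U0 → Xi → ProbabilityMeasure X → ProbabilityMeasure X)
    (γ : ℝ) (f : X0 × (U0 × Xi) × ProbabilityMeasure X → ℝ) (T : ℕ)
    (θ : Θ) (s : X0 × (U0 × Xi) × ProbabilityMeasure X) : ℝ :=
  ∑ t ∈ Finset.range T, γ ^ t * ∫ z, f z ∂(pLimLawFrom p0 pit TG θ (Measure.dirac s) t)

lemma LipS.mul {L L' B B' : ℝ} {f g : X0 × (U0 × Xi) × ProbabilityMeasure X → ℝ}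
    (hf : LipS L f) (hg : LipS L' g) (hfB : ∀ s, |f s| ≤ B) (hgB : ∀ s, |g s| ≤ B') :
    LipS (L * B' + B * L') fun s => f s * g s := by
  intro s s'
  have e : f s * g s - f s' * g s' = (f s - f s') * g s + f s' * (g s - g s') := by ring
  rw [e]
  refine (abs_add_le _ _).trans ?_
  rw [abs_mul, abs_mul]
  have h1 := mul_le_mul (hf s s') (hgB s) (abs_nonneg _) ((abs_nonneg _).trans (hf s s'))
  have h2 := mul_le_mul (hfB s') (hg s s') (abs_nonneg _) ((abs_nonneg _).trans (hfB s'))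
  linarith

namespace Hyp
variable {M : ℝ}
    {p : X → U → X0 → U0 → ProbabilityMeasure X → ProbabilityMeasure X}
    {p0 : X0 → U0 → ProbabilityMeasure X → ProbabilityMeasure X0}
    {Γ : Xi → X → ProbabilityMeasure U}
    {pit : Θ → X0 → ProbabilityMeasure X → ProbabilityMeasure (U0 × Xi)} {θ : Θ}
    {TG : X0 → U0 → Xi → ProbabilityMeasure X → ProbabilityMeasure X}
    {γ R : ℝ} {f : X0 × (U0 × Xi) × ProbabilityMeasure X → ℝ}

lemma Qn_bdd (H : Hyp M p p0 Γ (pit θ) TG) (h0 : 0 < γ) (h1 : γ < 1) (hR : ∀ s, |f s| ≤ R) (N : ℕ)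
    (s : X0 × (U0 × Xi) × ProbabilityMeasure X) :
    |Qn p p0 Γ pit γ f N θ s| ≤ R * (1 - γ)⁻¹ :=
  norm_tsum_geo_le_const (E := ℝ) h0 h1 fun t => by
    haveI := H.prob_pLawN (iota N s) t
    exact abs_integral_le_bdd fun z => hR _

lemma Ql_bdd (H : Hyp M p p0 Γ (pit θ) TG) (h0 : 0 < γ) (h1 : γ < 1) (hR : ∀ s, |f s| ≤ R)
    (s : X0 × (U0 × Xi) × ProbabilityMeasure X) :
    |Ql p0 pit TG γ f θ s| ≤ R * (1 - γ)⁻¹ :=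
  norm_tsum_geo_le_const (E := ℝ) h0 h1 fun t => by
    haveI := H.prob_pLim (Measure.dirac s) t
    exact abs_integral_le_bdd fun z => hR _

lemma Ql_summable (H : Hyp M p p0 Γ (pit θ) TG) (h0 : 0 < γ) (h1 : γ < 1) (hR : ∀ s, |f s| ≤ R)
    (s : X0 × (U0 × Xi) × ProbabilityMeasure X) :
    Summable fun t : ℕ => γ ^ t * ∫ z, f z ∂(pLimLawFrom p0 pit TG θ (Measure.dirac s) t) :=
  summable_geo (E := ℝ) h0 h1 (B := R) fun t => by
    haveI := H.prob_pLim (Measure.dirac s) t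
    exact abs_integral_le_bdd fun z => hR _

lemma Qn_summable (H : Hyp M p p0 Γ (pit θ) TG) (h0 : 0 < γ) (h1 : γ < 1) (hR : ∀ s, |f s| ≤ R) (N : ℕ)
    (s : X0 × (U0 × Xi) × ProbabilityMeasure X) :
    Summable fun t : ℕ => γ ^ t * ∫ z, f (eN z) ∂(pLawNFrom p p0 Γ pit θ N (iota N s) t) :=
  summable_geo (E := ℝ) h0 h1 (B := R) fun t => by
    haveI := H.prob_pLawN (iota N s) t
    exact abs_integral_le_bdd fun z => hR _

lemma Ql_sub_QT (H : Hyp M p p0 Γ (pit θ) TG) (h0 : 0 < γ) (h1 : γ < 1) (hR : ∀ s, |f s| ≤ R) (T : ℕ)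
    (s : X0 × (U0 × Xi) × ProbabilityMeasure X) :
    |Ql p0 pit TG γ f θ s - QT p0 pit TG γ f T θ s| ≤ γ ^ T * (R * (1 - γ)⁻¹) := by
  unfold Ql QT
  rw [← (H.Ql_summable h0 h1 hR s).sum_add_tsum_nat_add T, add_sub_cancel_left]
  have e3 : ∀ t, γ ^ (t + T) * ∫ z, f z ∂(pLimLawFrom p0 pit TG θ (Measure.dirac s) (t + T)) =
      γ ^ T * (γ ^ t * ∫ z, f z ∂(pLimLawFrom p0 pit TG θ (Measure.dirac s) (t + T))) := fun t => by
    rw [pow_add]; ring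
  simp only [e3]
  rw [tsum_mul_left, abs_mul, abs_of_nonneg (pow_nonneg h0.le T)]
  refine mul_le_mul_of_nonneg_left ?_ (pow_nonneg h0.le T)
  exact norm_tsum_geo_le_const (E := ℝ) h0 h1 fun t => by
    haveI := H.prob_pLim (Measure.dirac s) (t + T)
    exact abs_integral_le_bdd fun z => hR _

lemma QT_bdd (H : Hyp M p p0 Γ (pit θ) TG) (h0 : 0 < γ) (h1 : γ < 1) (hR : ∀ s, |f s| ≤ R) (T : ℕ)
    (s : X0 × (U0 × Xi) × ProbabilityMeasure X) :
    |QT p0 pit TG γ f T θ s| ≤ R * (1 - γ)⁻¹ := by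
  unfold QT
  have hR0 : 0 ≤ R := (abs_nonneg _).trans (hR s)
  calc _ ≤ ∑ t ∈ Finset.range T, γ ^ t * R := by
        refine (Finset.abs_sum_le_sum_abs _ _).trans (Finset.sum_le_sum fun t _ => ?_)
        rw [abs_mul, abs_of_nonneg (pow_nonneg h0.le t)]
        refine mul_le_mul_of_nonneg_left ?_ (pow_nonneg h0.le t)
        haveI := H.prob_pLim (Measure.dirac s) t
        exact abs_integral_le_bdd fun z => hR _
    _ = R * ∑ t ∈ Finset.range T, γ ^ t := by rw [← Finset.sum_mul, mul_comm]
    _ ≤ R * (1 - γ)⁻¹ := by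
        refine mul_le_mul_of_nonneg_left ?_ hR0
        rw [← tsum_geometric_of_lt_one h0.le h1]
        exact (summable_geometric_of_lt_one h0.le h1).sum_le_tsum _ fun t _ => pow_nonneg h0.le t

lemma QT_lip (H : Hyp M p p0 Γ (pit θ) TG) (h0 : 0 < γ) {L : ℝ} (hL : 0 ≤ L) (hf : LipS L f) (T : ℕ) :
    LipS (∑ t ∈ Finset.range T, γ ^ t * (L * (10 * M ^ 3) ^ t)) (QT p0 pit TG γ f T θ) := by
  intro s s'
  unfold QT
  rw [← Finset.sum_sub_distrib, Finset.sum_mul]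
  refine (Finset.abs_sum_le_sum_abs _ _).trans (Finset.sum_le_sum fun t _ => ?_)
  rw [← mul_sub, abs_mul, abs_of_nonneg (pow_nonneg h0.le t), mul_assoc]
  exact mul_le_mul_of_nonneg_left (H.lim_dirac_lip hL hf t s s') (pow_nonneg h0.le t)

lemma Ql_meas (H : Hyp M p p0 Γ (pit θ) TG) (h0 : 0 < γ) (h1 : γ < 1) (hR : ∀ s, |f s| ≤ R)
    {L : ℝ} (hL : 0 ≤ L) (hf : LipS L f) : Measurable (Ql p0 pit TG γ f θ) := by
  refine measurable_of_tendsto_metrizable (f := fun T => QT p0 pit TG γ f T θ)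
    (fun T => (H.QT_lip h0 hL hf T).measurable) ?_
  rw [tendsto_pi_nhds]
  intro s
  exact (H.Ql_summable h0 h1 hR s).hasSum.tendsto_sum_nat

lemma meas_pLawN (H : Hyp M p p0 Γ (pit θ) TG) (N t : ℕ) :
    Measurable fun s : X0 × (U0 × Xi) × ProbabilityMeasure X =>
      pLawNFrom p p0 Γ pit θ N (iota N s) t := by
  induction t with
  | zero => exact meas_iota N
  | succ t ih =>
    simp only [pLawN_succ]
    exact (Measure.measurable_bind' (H.meas_nKer N)).comp ih

lemma Qn_meas (H : Hyp M p p0 Γ (pit θ) TG) (h0 : 0 < γ) (h1 : γ < 1) (hR : ∀ s, |f s| ≤ R)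
    (hf : Measurable f) (N : ℕ) : Measurable (Qn p p0 Γ pit γ f N θ) := by
  refine measurable_of_tendsto_metrizable (f := fun T s => ∑ t ∈ Finset.range T,
    γ ^ t * ∫ z, f (eN z) ∂(pLawNFrom p p0 Γ pit θ N (iota N s) t)) (fun T => ?_) ?_
  · refine Finset.measurable_sum _ fun t _ => Measurable.const_mul ?_ _
    exact measurable_integral_measure (H.meas_pLawN N t) (hf.comp measurable_eN)
  · rw [tendsto_pi_nhds]
    intro s
    exact (H.Qn_summable h0 h1 hR N s).hasSum.tendsto_sum_nat

end Hyp
end SYS7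

section SYS8
variable {X U X0 U0 Xi Θ : Type*}
    [MetricSpace X] [CompactSpace X] [MeasurableSpace X] [BorelSpace X] [Nonempty X]
    [MetricSpace U] [CompactSpace U] [MeasurableSpace U] [BorelSpace U]
    [MetricSpace X0] [CompactSpace X0] [MeasurableSpace X0] [BorelSpace X0]
    [MetricSpace U0] [CompactSpace U0] [MeasurableSpace U0] [BorelSpace U0]
    [MetricSpace Xi] [CompactSpace Xi] [MeasurableSpace Xi] [BorelSpace Xi]
    [NormedAddCommGroup Θ] [NormedSpace ℝ Θ] [CompleteSpace Θ]
    {M : ℝ}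
    {p : X → U → X0 → U0 → ProbabilityMeasure X → ProbabilityMeasure X}
    {p0 : X0 → U0 → ProbabilityMeasure X → ProbabilityMeasure X0}
    {Γ : Xi → X → ProbabilityMeasure U}
    {pit : Θ → X0 → ProbabilityMeasure X → ProbabilityMeasure (U0 × Xi)}
    {TG : X0 → U0 → Xi → ProbabilityMeasure X → ProbabilityMeasure X}
    {γ R L : ℝ} {f : X0 × (U0 × Xi) × ProbabilityMeasure X → ℝ}

lemma Q_close (H : ∀ θ, Hyp M p p0 Γ (pit θ) TG) (h0 : 0 < γ) (h1 : γ < 1) (hR : ∀ s, |f s| ≤ R)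
    (hL : 0 ≤ L) (hf : LipS L f) :
    ∀ δ > (0:ℝ), ∃ N0 : ℕ, ∀ N ≥ N0, ∀ θ s,
      |Qn p p0 Γ pit γ f N θ s - Ql p0 pit TG γ f θ s| ≤ δ := by
  have hP1 : ∀ N θ s t, |∫ z, f (eN z) ∂(pLawNFrom p p0 Γ pit θ N (iota N s) t)| ≤ R := fun N θ s t => by
    haveI := (H θ).prob_pLawN (iota N s) t
    exact abs_integral_le_bdd fun z => hR _
  have hP2 : ∀ θ s t, |∫ z, f z ∂(pLimLawFrom p0 pit TG θ (Measure.dirac s) t)| ≤ R := fun θ s t => by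
    haveI := (H θ).prob_pLim (Measure.dirac s) t
    exact abs_integral_le_bdd fun z => hR _
  have hB : ∀ N θ s t, |∫ z, f (eN z) ∂(pLawNFrom p p0 Γ pit θ N (iota N s) t)
        - ∫ z, f z ∂(pLimLawFrom p0 pit TG θ (Measure.dirac s) t)| ≤ 2 * R := fun N θ s t => by
    have := abs_sub (∫ z, f (eN z) ∂(pLawNFrom p p0 Γ pit θ N (iota N s) t))
      (∫ z, f z ∂(pLimLawFrom p0 pit TG θ (Measure.dirac s) t))
    linarith [hP1 N θ s t, hP2 θ s t]
  have key := tsum_unif (I := Θ × (X0 × (U0 × Xi) × ProbabilityMeasure X)) h0 h1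
    (a := fun N i t => |∫ z, f (eN z) ∂(pLawNFrom p p0 Γ pit i.1 N (iota N i.2) t)
        - ∫ z, f z ∂(pLimLawFrom p0 pit TG i.1 (Measure.dirac i.2) t)|) (B := 2 * R)
    (fun _ _ _ => abs_nonneg _) (fun N i t => hB N i.1 i.2 t) (fun t ε hε => by
      by_cases hne : Nonempty Θ
      · have hM := (H hne.some).one_le
        set K := L * (Bc (10 * M ^ 3) t * 2) with hK
        have hK0 : 0 ≤ K := mul_nonneg hL (mul_nonneg (Bc_nonneg (by positivity) t) (by norm_num))
        have he : 0 < ε / (K + 1) := by positivity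
        obtain ⟨N0, hN00, hN0⟩ := lln (X := X) he
        refine ⟨N0, fun N hN i => ?_⟩
        have hNz : N ≠ 0 := by omega
        have := (H i.1).close_all hNz he.le (hN0 N hN) (iota N i.2) (Measure.dirac i.2) he.le
          ((H i.1).init1 hNz (hN0 N hN) i.2.2.2 i.2.1 i.2.2.1.1 i.2.2.1.2) t L hL f hf
        refine this.trans ?_
        have e : L * (Bc (10 * M ^ 3) t * (ε / (K + 1) + ε / (K + 1))) = K * (ε / (K + 1)) := by
          rw [hK]; ring
        rw [e, mul_div_assoc', div_le_iff₀ (by linarith)]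
        nlinarith
      · exact ⟨0, fun N _ i => (hne ⟨i.1⟩).elim⟩)
  intro δ hδ
  obtain ⟨N0, hN0⟩ := key δ hδ
  refine ⟨N0, fun N hN θ s => le_trans ?_ (hN0 N hN (θ, s))⟩
  unfold Qn Ql
  rw [← ((H θ).Qn_summable h0 h1 hR N s).tsum_sub ((H θ).Ql_summable h0 h1 hR s)]
  simp only [← mul_sub]
  exact norm_tsum_geo_le (E := ℝ) h0 h1 (fun t => le_rfl) (fun t => hB N θ s t)

lemma grad_bound (θ : Θ) (H : Hyp M p p0 Γ (pit θ) TG) (h0 : 0 < γ) (h1 : γ < 1) (hR : ∀ s, |f s| ≤ R)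
    (hR0 : 0 ≤ R) (hL : 0 ≤ L) (hf : LipS L f) {sc : X0 × (U0 × Xi) × ProbabilityMeasure X → Θ} {Cs : ℝ}
    (hC0 : 0 ≤ Cs) (hsB : ∀ s, ‖sc s‖ ≤ Cs) {Ls : ℝ} (hLs : 0 ≤ Ls)
    (hsL : ∀ s s', ‖sc s - sc s'‖ ≤ Ls * dS s s')
    {N : ℕ} {δ c : ℝ} (hδ : ∀ s, |Qn p p0 Γ pit γ f N θ s - Ql p0 pit TG γ f θ s| ≤ δ) (hδ0 : 0 ≤ δ)
    (P : Measure (X0 × (U0 × Xi) × (Fin N → X))) [IsProbabilityMeasure P]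
    (P' : Measure (X0 × (U0 × Xi) × ProbabilityMeasure X)) [IsProbabilityMeasure P']
    (hc : 0 ≤ c) (hPP : Close P P' c) (T : ℕ) :
    ‖∫ s, Qn p p0 Γ pit γ f N θ (eN s) • sc (eN s) ∂P - ∫ s, Ql p0 pit TG γ f θ s • sc s ∂P'‖ ≤
      Cs * (δ + 2 * (γ ^ T * (R * (1 - γ)⁻¹))) +
        ((∑ t ∈ Finset.range T, γ ^ t * (L * (10 * M ^ 3) ^ t)) * Cs + R * (1 - γ)⁻¹ * Ls) * c := by
  have hM := H.one_le
  have hg : 0 < 1 - γ := by linarith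
  have hsm : StronglyMeasurable sc := stronglyMeasurable_of_dS hsL
  set B := R * (1 - γ)⁻¹ with hB
  have hB0 : 0 ≤ B := by positivity
  set KT := ∑ t ∈ Finset.range T, γ ^ t * (L * (10 * M ^ 3) ^ t) with hKT
  have hKT0 : 0 ≤ KT := Finset.sum_nonneg fun t _ => by positivity
  have hγT : 0 ≤ γ ^ T := pow_nonneg h0.le T
  have mQn := H.Qn_meas h0 h1 hR hf.measurable N
  have mQl := H.Ql_meas h0 h1 hR hL hf
  have bQn := H.Qn_bdd h0 h1 hR N
  have bQl := H.Ql_bdd h0 h1 hR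
  have i1 : Integrable (fun s => Qn p p0 Γ pit γ f N θ (eN s) • sc (eN s)) P := by
    refine Integrable.of_bound ((mQn.stronglyMeasurable.comp_measurable measurable_eN).smul
      (hsm.comp_measurable measurable_eN)).aestronglyMeasurable (B * Cs) (ae_of_all _ fun s => ?_)
    rw [norm_smul]
    exact mul_le_mul (bQn _) (hsB _) (norm_nonneg _) hB0
  have i2 : Integrable (fun s => Ql p0 pit TG γ f θ s • sc s) P' := by
    refine Integrable.of_bound (mQl.stronglyMeasurable.smul hsm).aestronglyMeasurable (B * Cs)
      (ae_of_all _ fun s => ?_)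
    rw [norm_smul]
    exact mul_le_mul (bQl _) (hsB _) (norm_nonneg _) hB0
  refine NormedSpace.norm_le_dual_bound (𝕜 := ℝ) _ (by positivity) fun ℓ => ?_
  have hℓ : ∀ s, |ℓ (sc s)| ≤ ‖ℓ‖ * Cs := fun s =>
    (ℓ.le_opNorm _).trans (mul_le_mul_of_nonneg_left (hsB s) (norm_nonneg _))
  have hℓL : LipS (‖ℓ‖ * Ls) fun s => ℓ (sc s) := fun s s' => by
    rw [← map_sub, mul_assoc]
    exact (ℓ.le_opNorm _).trans (mul_le_mul_of_nonneg_left (hsL s s') (norm_nonneg _))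
  have hF := (H.QT_lip h0 hL hf T).mul hℓL (H.QT_bdd h0 h1 hR T) hℓ
  have hFb : ∀ s, |QT p0 pit TG γ f T θ s * ℓ (sc s)| ≤ B * (‖ℓ‖ * Cs) := fun s => by
    rw [abs_mul]
    exact mul_le_mul (H.QT_bdd h0 h1 hR T s) (hℓ s) (abs_nonneg _) hB0
  rw [map_sub, ← ContinuousLinearMap.integral_comp_comm ℓ i1, ← ContinuousLinearMap.integral_comp_comm ℓ i2]
  simp only [map_smul, smul_eq_mul]
  have hcl := hPP _ (by positivity) _ hF
  have mℓ : Measurable fun s => ℓ (sc s) := hℓL.measurable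
  have j1 := abs_integral_sub_le_const P (f := fun s => Qn p p0 Γ pit γ f N θ (eN s) * ℓ (sc (eN s)))
    (g := fun s => QT p0 pit TG γ f T θ (eN s) * ℓ (sc (eN s))) (c := (δ + γ ^ T * B) * (‖ℓ‖ * Cs))
    (integrable_bdd ((mQn.comp measurable_eN).mul (mℓ.comp measurable_eN)) (c := B * (‖ℓ‖ * Cs)) fun s => by
      simp only [Pi.mul_apply, Function.comp, abs_mul]
      exact mul_le_mul (bQn _) (hℓ _) (abs_nonneg _) hB0)
    (integrable_bdd (hF.measurable.comp measurable_eN) fun s => hFb _)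
    (fun s => by
      rw [← sub_mul, abs_mul]
      refine mul_le_mul ?_ (hℓ _) (abs_nonneg _) (by positivity)
      exact (abs_sub_le _ (Ql p0 pit TG γ f θ (eN s)) _).trans
        (add_le_add (hδ _) (H.Ql_sub_QT h0 h1 hR T _)))
  have j2 := abs_integral_sub_le_const P' (f := fun s => QT p0 pit TG γ f T θ s * ℓ (sc s))
    (g := fun s => Ql p0 pit TG γ f θ s * ℓ (sc s)) (c := (γ ^ T * B) * (‖ℓ‖ * Cs))
    (integrable_bdd hF.measurable hFb)
    (integrable_bdd (mQl.mul mℓ) (c := B * (‖ℓ‖ * Cs)) fun s => by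
      simp only [Pi.mul_apply, abs_mul]
      exact mul_le_mul (bQl _) (hℓ _) (abs_nonneg _) hB0)
    (fun s => by
      rw [← sub_mul, abs_mul]
      refine mul_le_mul ?_ (hℓ _) (abs_nonneg _) (by positivity)
      rw [abs_sub_comm]
      exact H.Ql_sub_QT h0 h1 hR T _)
  rw [Real.norm_eq_abs]
  refine (abs_sub_le _ _ _).trans ((add_le_add (le_refl _) ((abs_sub_le _ _ _).trans
    (add_le_add hcl j2))).trans ((add_le_add j1 (le_refl _)).trans (le_of_eq ?_)))
  ring

lemma grad_term (H : ∀ θ, Hyp M p p0 Γ (pit θ) TG) (h0 : 0 < γ) (h1 : γ < 1) (hR : ∀ s, |f s| ≤ R)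
    (hR0 : 0 ≤ R) (hL : 0 ≤ L) (hf : LipS L f) {sc : Θ → X0 × (U0 × Xi) × ProbabilityMeasure X → Θ} {Cs : ℝ}
    (hC0 : 0 ≤ Cs) (hsB : ∀ θ s, ‖sc θ s‖ ≤ Cs) {Ls : ℝ} (hLs : 0 ≤ Ls)
    (hsL : ∀ θ s s', ‖sc θ s - sc θ s'‖ ≤ Ls * dS s s') (μ0 : ProbabilityMeasure X) (x00 : X0) (t : ℕ) :
    ∀ ε > (0:ℝ), ∃ N0 : ℕ, ∀ N ≥ N0, ∀ θ,
    ‖∫ s, Qn p p0 Γ pit γ f N θ (eN s) • sc θ (eN s) ∂(pLawNFrom p p0 Γ pit θ N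
              ((Measure.pi fun _ : Fin N => (μ0 : Measure X)).bind fun x =>
                ((pit θ x00 (emp N x) : Measure (U0 × Xi))).map fun a => (x00, a, x)) t)
      - ∫ s, Ql p0 pit TG γ f θ s • sc θ s ∂(pLimLawFrom p0 pit TG θ
              (((pit θ x00 μ0 : Measure (U0 × Xi))).map fun a => (x00, a, μ0)) t)‖ ≤ ε := by
  intro ε hε
  have hM := (H 0).one_le
  have hg : 0 < 1 - γ := by linarith
  obtain ⟨T, hT⟩ : ∃ T : ℕ, Cs * (2 * (γ ^ T * (R * (1 - γ)⁻¹))) ≤ ε / 3 := by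
    have : Tendsto (fun T : ℕ => Cs * (2 * (γ ^ T * (R * (1 - γ)⁻¹)))) atTop
        (𝓝 (Cs * (2 * (0 * (R * (1 - γ)⁻¹))))) :=
      (((tendsto_pow_atTop_nhds_zero_of_lt_one h0.le h1).mul_const _).const_mul 2).const_mul Cs
    simp only [zero_mul, mul_zero] at this
    obtain ⟨T, hT⟩ := (this.eventually (gt_mem_nhds (show (0:ℝ) < ε / 3 by positivity))).exists
    exact ⟨T, le_of_lt hT⟩
  have hδ : 0 < ε / 3 / (Cs + 1) := by positivity
  obtain ⟨N1, hN1⟩ := Q_close H h0 h1 hR hL hf _ hδ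
  have hδ' : Cs * (ε / 3 / (Cs + 1)) ≤ ε / 3 := by
    rw [mul_div_assoc', div_le_iff₀ (by linarith)]; nlinarith
  set K := ((∑ t ∈ Finset.range T, γ ^ t * (L * (10 * M ^ 3) ^ t)) * Cs + R * (1 - γ)⁻¹ * Ls) *
    (Bc (10 * M ^ 3) t * (1 + 2 * M)) with hK
  have hB := Bc_nonneg (C := 10 * M ^ 3) (by positivity) t
  have hK0 : 0 ≤ K := by
    have : 0 ≤ ∑ t ∈ Finset.range T, γ ^ t * (L * (10 * M ^ 3) ^ t) :=
      Finset.sum_nonneg fun t _ => by positivity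
    positivity
  have he : 0 < ε / 3 / (K + 1) := by positivity
  obtain ⟨N2, hN20, hN2⟩ := lln (X := X) he
  refine ⟨max N1 N2, fun N hN θ => ?_⟩
  have hNz : N ≠ 0 := by have := (le_max_right _ _).trans hN; omega
  have hlln := hN2 N ((le_max_right _ _).trans hN)
  haveI := (H θ).prob_init2 N x00 μ0
  haveI : IsProbabilityMeasure (((pit θ x00 μ0 : Measure (U0 × Xi))).map fun a => (x00, a, μ0)) :=
    Measure.isProbabilityMeasure_map (by fun_prop)
  have hcl := (H θ).close_all hNz he.le hlln _ _ (by positivity) ((H θ).init2 hNz hlln μ0 x00) t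
  haveI := (H θ).prob_pLawN ((Measure.pi fun _ : Fin N => (μ0 : Measure X)).bind fun x =>
                ((pit θ x00 (emp N x) : Measure (U0 × Xi))).map fun a => (x00, a, x)) t
  haveI := (H θ).prob_pLim (((pit θ x00 μ0 : Measure (U0 × Xi))).map fun a => (x00, a, μ0)) t
  refine (grad_bound θ (H θ) h0 h1 hR hR0 hL hf hC0 (hsB θ) hLs (hsL θ)
    (hN1 N ((le_max_left _ _).trans hN) θ) hδ.le _ _ (by positivity) hcl T).trans ?_
  have e : ((∑ t ∈ Finset.range T, γ ^ t * (L * (10 * M ^ 3) ^ t)) * Cs + R * (1 - γ)⁻¹ * Ls) *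
      (Bc (10 * M ^ 3) t * (ε / 3 / (K + 1) + 2 * M * (ε / 3 / (K + 1)))) = K * (ε / 3 / (K + 1)) := by
    rw [hK]; ring
  have e2 : K * (ε / 3 / (K + 1)) ≤ ε / 3 := by
    rw [mul_div_assoc', div_le_iff₀ (by linarith)]; nlinarith
  rw [e, mul_add]
  linarith

end SYS8

end Helpers

/-- policy gradient approximation by the finite system. With
`∇_θ J(π̃^θ) = Σ_t γ^t E[Q^θ(x⁰ₜ,μₜ,u⁰ₜ,ξₜ) ∇_θ log π̃^θ(u⁰ₜ,ξₜ|x⁰ₜ,μₜ)]` the exact policy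
gradient of the limiting M3FC MDP and `∇̂_θ J(π̃^θ)` its approximation computed on the
`N`-agent M3FC system, `‖∇̂_θ J(π̃^θ) − ∇_θ J(π̃^θ)‖ → 0` as `N → ∞`, uniformly over the
policy parameters `θ`. -/
theorem statement19 {X U X0 U0 Xi Θ : Type*}
    [MetricSpace X] [CompactSpace X] [MeasurableSpace X] [BorelSpace X] [Nonempty X]
    [MetricSpace U] [CompactSpace U] [MeasurableSpace U] [BorelSpace U]
    [MetricSpace X0] [CompactSpace X0] [MeasurableSpace X0] [BorelSpace X0]
    [MetricSpace U0] [CompactSpace U0] [MeasurableSpace U0] [BorelSpace U0]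
    [MetricSpace Xi] [CompactSpace Xi] [MeasurableSpace Xi] [BorelSpace Xi]
    [NormedAddCommGroup Θ] [NormedSpace ℝ Θ] [CompleteSpace Θ]
    (Lp Lp0 Lr LPi LΓ Lpit Ls Cs LF : ℝ)
    (p : X → U → X0 → U0 → ProbabilityMeasure X → ProbabilityMeasure X)
    (hp : ∀ (x x' : X) (u u' : U) (x0 x0' : X0) (u0 u0' : U0)
        (μ μ' : ProbabilityMeasure X) (f : X → ℝ), LipschitzWith 1 f →
      |∫ y, f y ∂(p x u x0 u0 μ : Measure X) - ∫ y, f y ∂(p x' u' x0' u0' μ' : Measure X)|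
        ≤ Lp * (dist x x' + dist u u' + dist x0 x0' + dist u0 u0' + W1 μ μ'))
    (p0 : X0 → U0 → ProbabilityMeasure X → ProbabilityMeasure X0)
    (hp0 : ∀ (x0 x0' : X0) (u0 u0' : U0) (μ μ' : ProbabilityMeasure X) (f : X0 → ℝ),
        LipschitzWith 1 f →
      |∫ y, f y ∂(p0 x0 u0 μ : Measure X0) - ∫ y, f y ∂(p0 x0' u0' μ' : Measure X0)|
        ≤ Lp0 * (dist x0 x0' + dist u0 u0' + W1 μ μ'))
    (r : X0 → U0 → ProbabilityMeasure X → ℝ)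
    (hr : ∀ (x0 x0' : X0) (u0 u0' : U0) (μ μ' : ProbabilityMeasure X),
      |r x0 u0 μ - r x0' u0' μ'| ≤ Lr * (dist x0 x0' + dist u0 u0' + W1 μ μ'))
    (Γ : Xi → X → ProbabilityMeasure U)
    (hΓrule : ∀ (ξ : Xi) (x x' : X) (g : U → ℝ), LipschitzWith 1 g →
      |∫ u, g u ∂(Γ ξ x : Measure U) - ∫ u, g u ∂(Γ ξ x' : Measure U)| ≤ LPi * dist x x')
    (hΓ : ∀ (ξ ξ' : Xi) (x : X) (g : U → ℝ), LipschitzWith 1 g →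
      |∫ u, g u ∂(Γ ξ x : Measure U) - ∫ u, g u ∂(Γ ξ' x : Measure U)| ≤ LΓ * dist ξ ξ')
    (pit : Θ → X0 → ProbabilityMeasure X → ProbabilityMeasure (U0 × Xi))
    (hpit : ∀ (θ θ' : Θ) (x0 x0' : X0) (μ μ' : ProbabilityMeasure X) (g : U0 × Xi → ℝ),
      (∀ a b : U0 × Xi, |g a - g b| ≤ dist a.1 b.1 + dist a.2 b.2) →
      |∫ a, g a ∂(pit θ x0 μ : Measure (U0 × Xi))
          - ∫ a, g a ∂(pit θ' x0' μ' : Measure (U0 × Xi))|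
        ≤ Lpit * (dist θ θ' + dist x0 x0' + W1 μ μ'))
    (score : Θ → X0 → ProbabilityMeasure X → U0 × Xi → Θ)
    (hscoreB : ∀ θ x0 μ a, ‖score θ x0 μ a‖ ≤ Cs)
    (hscoreL : ∀ (θ θ' : Θ) (x0 x0' : X0) (μ μ' : ProbabilityMeasure X) (a a' : U0 × Xi),
      ‖score θ x0 μ a - score θ' x0' μ' a'‖
        ≤ Ls * (dist θ θ' + dist x0 x0' + W1 μ μ' + dist a.1 a'.1 + dist a.2 a'.2))
    (μ0 : ProbabilityMeasure X) (x00 : X0)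
    (TG : X0 → U0 → Xi → ProbabilityMeasure X → ProbabilityMeasure X)
    (hTG : ∀ (x0 : X0) (u0 : U0) (ξ : Xi) (μ : ProbabilityMeasure X),
      (TG x0 u0 ξ μ : Measure X) = (μ : Measure X).bind fun x =>
        ((Γ ξ x : Measure U)).bind fun u => (p x u x0 u0 μ : Measure X))
    (γ : ℝ) (hγ0 : 0 < γ) (hγ1 : γ < 1)
    (Qhat : (N : ℕ) → Θ → X0 → ProbabilityMeasure X → U0 → Xi → ℝ)
    (hQhat : ∀ (N : ℕ) (θ : Θ) (x0 : X0) (μ : ProbabilityMeasure X) (u0 : U0) (ξ : Xi),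
      Qhat N θ x0 μ u0 ξ = ∑' t : ℕ, γ ^ t * ∫ s, r s.1 s.2.1.1 (emp N s.2.2)
        ∂(pLawNFrom p p0 Γ pit θ N
          ((Measure.pi fun _ : Fin N => (μ : Measure X)).map fun x => (x0, (u0, ξ), x)) t))
    (Qlim : Θ → X0 → ProbabilityMeasure X → U0 → Xi → ℝ)
    (hQlim : ∀ (θ : Θ) (x0 : X0) (μ : ProbabilityMeasure X) (u0 : U0) (ξ : Xi),
      Qlim θ x0 μ u0 ξ = ∑' t : ℕ, γ ^ t * ∫ s, r s.1 s.2.1.1 s.2.2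
        ∂(pLimLawFrom p0 pit TG θ (Measure.dirac (x0, (u0, ξ), μ)) t)) :
    ∀ ε > (0 : ℝ), ∃ N0 : ℕ, ∀ N ≥ N0, ∀ θ : Θ,
      ‖(∑' t : ℕ, γ ^ t •
          ∫ s, Qhat N θ s.1 (emp N s.2.2) s.2.1.1 s.2.1.2 • score θ s.1 (emp N s.2.2) s.2.1
            ∂(pLawNFrom p p0 Γ pit θ N
              ((Measure.pi fun _ : Fin N => (μ0 : Measure X)).bind fun x =>
                ((pit θ x00 (emp N x) : Measure (U0 × Xi))).map fun a => (x00, a, x)) t))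
        - ∑' t : ℕ, γ ^ t •
          ∫ s, Qlim θ s.1 s.2.2 s.2.1.1 s.2.1.2 • score θ s.1 s.2.2 s.2.1
            ∂(pLimLawFrom p0 pit TG θ
              (((pit θ x00 μ0 : Measure (U0 × Xi))).map fun a => (x00, a, μ0)) t)‖ ≤ ε := by
  set M := 1 + |Lp| + |Lp0| + |LPi| + |LΓ| + |Lpit| with hMdef
  have a1 := abs_nonneg Lp
  have a2 := abs_nonneg Lp0
  have a3 := abs_nonneg LPi
  have a4 := abs_nonneg LΓ
  have a5 := abs_nonneg Lpit
  have H : ∀ θ, Hyp M p p0 Γ (pit θ) TG := fun θ =>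
    { one_le := by linarith
      hp := fun x x' u u' x0 x0' u0 u0' μ μ' f hf => by
        refine (hp x x' u u' x0 x0' u0 u0' μ μ' f hf).trans (mul_le_mul_of_nonneg_right ?_ ?_)
        · linarith [le_abs_self Lp]
        · have := W1_nonneg μ μ'
          positivity
      hp0 := fun x0 x0' u0 u0' μ μ' f hf => by
        refine (hp0 x0 x0' u0 u0' μ μ' f hf).trans (mul_le_mul_of_nonneg_right ?_ ?_)
        · linarith [le_abs_self Lp0]
        · have := W1_nonneg μ μ'
          positivity
      hΓ := fun ξ ξ' x x' g hg => by
        refine (abs_sub_le _ _ _).trans ((add_le_add (hΓ ξ ξ' x g hg) (hΓrule ξ' x x' g hg)).trans ?_)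
        have h1 : LΓ * dist ξ ξ' ≤ M * dist ξ ξ' :=
          mul_le_mul_of_nonneg_right (by linarith [le_abs_self LΓ]) dist_nonneg
        have h2 : LPi * dist x x' ≤ M * dist x x' :=
          mul_le_mul_of_nonneg_right (by linarith [le_abs_self LPi]) dist_nonneg
        linarith
      hpt := fun x0 x0' μ μ' g hg => by
        refine (hpit θ θ x0 x0' μ μ' g hg).trans ?_
        rw [dist_self, zero_add]
        refine mul_le_mul_of_nonneg_right ?_ ?_
        · linarith [le_abs_self Lpit]
        · have := W1_nonneg μ μ'
          positivity
      hTG := hTG }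
  have hf : LipS |Lr| (fun s : X0 × (U0 × Xi) × ProbabilityMeasure X => r s.1 s.2.1.1 s.2.2) := by
    intro s s'
    have h1 := W1_nonneg s.2.2 s'.2.2
    have h2 : 0 ≤ dist s.2.1.2 s'.2.1.2 := dist_nonneg
    refine (hr _ _ _ _ _ _).trans (mul_le_mul (le_abs_self _) ?_ (by positivity) (abs_nonneg _))
    unfold dS
    linarith
  obtain ⟨R', hR'⟩ := hf.bdd
  have hR : ∀ s : X0 × (U0 × Xi) × ProbabilityMeasure X, |r s.1 s.2.1.1 s.2.2| ≤ |R'| :=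
    fun s => (hR' s).trans (le_abs_self _)
  have hR0 : 0 ≤ |R'| := abs_nonneg _
  have hsB : ∀ θ (s : X0 × (U0 × Xi) × ProbabilityMeasure X), ‖score θ s.1 s.2.2 s.2.1‖ ≤ |Cs| :=
    fun θ s => (hscoreB _ _ _ _).trans (le_abs_self _)
  have hsL : ∀ θ (s s' : X0 × (U0 × Xi) × ProbabilityMeasure X),
      ‖score θ s.1 s.2.2 s.2.1 - score θ s'.1 s'.2.2 s'.2.1‖ ≤ |Ls| * dS s s' := fun θ s s' => by
    have h1 := W1_nonneg s.2.2 s'.2.2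
    refine (hscoreL θ θ _ _ _ _ _ _).trans (mul_le_mul (le_abs_self _) ?_ (by positivity) (abs_nonneg _))
    rw [dist_self]
    unfold dS
    linarith
  have hterm := grad_term (pit := pit) H hγ0 hγ1 hR hR0 (abs_nonneg Lr) hf
    (sc := fun θ s => score θ s.1 s.2.2 s.2.1) (abs_nonneg Cs) hsB (abs_nonneg Ls) hsL μ0 x00
  have eQh : ∀ (N : ℕ) (θ : Θ) (s : X0 × (U0 × Xi) × (Fin N → X)),
      Qhat N θ s.1 (emp N s.2.2) s.2.1.1 s.2.1.2 =
        Qn p p0 Γ pit γ (fun s => r s.1 s.2.1.1 s.2.2) N θ (eN s) := fun N θ s => hQhat _ _ _ _ _ _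
  have eQl : ∀ (θ : Θ) (s : X0 × (U0 × Xi) × ProbabilityMeasure X),
      Qlim θ s.1 s.2.2 s.2.1.1 s.2.1.2 =
        Ql p0 pit TG γ (fun s => r s.1 s.2.1.1 s.2.2) θ s := fun θ s => hQlim _ _ _ _ _
  have hg : 0 < 1 - γ := by linarith
  have hV : ∀ (N : ℕ) (θ : Θ) (t : ℕ),
      ‖∫ s, Qhat N θ s.1 (emp N s.2.2) s.2.1.1 s.2.1.2 • score θ s.1 (emp N s.2.2) s.2.1
            ∂(pLawNFrom p p0 Γ pit θ N
              ((Measure.pi fun _ : Fin N => (μ0 : Measure X)).bind fun x =>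
                ((pit θ x00 (emp N x) : Measure (U0 × Xi))).map fun a => (x00, a, x)) t)‖
        ≤ |R'| * (1 - γ)⁻¹ * |Cs| := fun N θ t => by
    haveI := (H θ).prob_init2 N x00 μ0
    haveI := (H θ).prob_pLawN ((Measure.pi fun _ : Fin N => (μ0 : Measure X)).bind fun x =>
                ((pit θ x00 (emp N x) : Measure (U0 × Xi))).map fun a => (x00, a, x)) t
    refine (norm_integral_le_of_norm_le_const (C := |R'| * (1 - γ)⁻¹ * |Cs|)
      (ae_of_all _ fun s => ?_)).trans (le_of_eq (by simp))
    rw [norm_smul, eQh]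
    exact mul_le_mul ((H θ).Qn_bdd hγ0 hγ1 hR N _) (hsB θ (eN s)) (norm_nonneg _) (by positivity)
  have hW : ∀ (θ : Θ) (t : ℕ),
      ‖∫ s, Qlim θ s.1 s.2.2 s.2.1.1 s.2.1.2 • score θ s.1 s.2.2 s.2.1
            ∂(pLimLawFrom p0 pit TG θ
              (((pit θ x00 μ0 : Measure (U0 × Xi))).map fun a => (x00, a, μ0)) t)‖
        ≤ |R'| * (1 - γ)⁻¹ * |Cs| := fun θ t => by
    haveI : IsProbabilityMeasure (((pit θ x00 μ0 : Measure (U0 × Xi))).map fun a => (x00, a, μ0)) :=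
      Measure.isProbabilityMeasure_map (by fun_prop)
    haveI := (H θ).prob_pLim (((pit θ x00 μ0 : Measure (U0 × Xi))).map fun a => (x00, a, μ0)) t
    refine (norm_integral_le_of_norm_le_const (C := |R'| * (1 - γ)⁻¹ * |Cs|)
      (ae_of_all _ fun s => ?_)).trans (le_of_eq (by simp))
    rw [norm_smul, eQl]
    exact mul_le_mul ((H θ).Ql_bdd hγ0 hγ1 hR _) (hsB θ s) (norm_nonneg _) (by positivity)
  have hD := fun (N : ℕ) (θ : Θ) (t : ℕ) => (norm_sub_le _ _).trans (add_le_add (hV N θ t) (hW θ t))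
  have key := tsum_unif hγ0 hγ1 (fun (N : ℕ) (θ : Θ) (t : ℕ) => norm_nonneg _) hD
    (fun t ε hε => by
      obtain ⟨N0, hN0⟩ := hterm t ε hε
      refine ⟨N0, fun N hN θ => ?_⟩
      have := hN0 N hN θ
      simp only [← eQh, ← eQl] at this
      exact this)
  intro ε hε
  obtain ⟨N0, hN0⟩ := key ε hε
  refine ⟨N0, fun N hN θ => le_trans ?_ (hN0 N hN θ)⟩
  rw [← (summable_geo hγ0 hγ1 (hV N θ)).tsum_sub (summable_geo hγ0 hγ1 (hW θ))]
  simp only [← smul_sub]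
  exact norm_tsum_geo_le hγ0 hγ1 (fun t => le_rfl) (fun t => hD N θ t)
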